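/- For every integer n ≥ 1, the theory PA⁻ + BΣ_{n+1} proves FRT^{<ω}(Σ_{n+1}): in every model M of PA⁻ + BΣ_{n+1}, for all e ≥ 1, k ≥ 1 and x in M there exists y in M such that every Σ_{n+1}-definable k-coloring of [y]^e has an M-finite homogeneous set of cardinality x. -/

import Mathlib

/- Shared development: first-order arithmetic in the language {0,1,+,·,<},
   the arithmetic hierarchy, fragments of arithmetic, and coded finite
   combinatorics inside models. -/

open FirstOrder Language

namespace ArithFC

/-- Function symbols of the language of arithmetic: 0, 1, +, ·. -/
inductive Func : ℕ → Type
  | zero : Func 0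
  | one : Func 0
  | add : Func 2
  | mul : Func 2

/-- Relation symbols of the language of arithmetic: <. -/
inductive Rel : ℕ → Type
  | lt : Rel 2

/-- The first-order language {0, 1, +, ·, <}. -/
def lang : Language :=
  { Functions := Func, Relations := Rel }

section Instances

variable (M : Type) [lang.Structure M]

instance : Zero M := ⟨Structure.funMap (L := lang) Func.zero ![]⟩
instance : One M := ⟨Structure.funMap (L := lang) Func.one ![]⟩
instance : Add M := ⟨fun x y => Structure.funMap (L := lang) Func.add ![x, y]⟩
instance : Mul M := ⟨fun x y => Structure.funMap (L := lang) Func.mul ![x, y]⟩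
instance : LT M := ⟨fun x y => Structure.RelMap (L := lang) Rel.lt ![x, y]⟩
instance : LE M := ⟨fun x y => x < y ∨ x = y⟩

end Instances

/-- The numeral `n` in a model. -/
def numM (M : Type) [lang.Structure M] : ℕ → M
  | 0 => 0
  | n + 1 => numM M n + 1

/-- `b` is nonstandard (greater than every numeral). -/
def Nonstd {M : Type} [lang.Structure M] (b : M) : Prop := ∀ n : ℕ, numM M n < b

/-- The atomic formula `t < u`. -/
def ltFm {α : Type} {n : ℕ} (t u : lang.Term (α ⊕ Fin n)) : lang.BoundedFormula α n :=
  BoundedFormula.rel (Rel.lt : lang.Relations 2) ![t, u]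

/-- Δ₀ formulas: built from atomic formulas by boolean connectives and
bounded universal quantification (this generates, up to logical equivalence,
the usual class of bounded formulas). -/
inductive IsDelta0 {α : Type} : ∀ n : ℕ, lang.BoundedFormula α n → Prop
  | falsum (n : ℕ) : IsDelta0 n BoundedFormula.falsum
  | equal (n : ℕ) (t u : lang.Term (α ⊕ Fin n)) : IsDelta0 n (BoundedFormula.equal t u)
  | rel (n l : ℕ) (R : lang.Relations l) (ts : Fin l → lang.Term (α ⊕ Fin n)) :
      IsDelta0 n (BoundedFormula.rel R ts)
  | imp (n : ℕ) {φ ψ : lang.BoundedFormula α n} :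
      IsDelta0 n φ → IsDelta0 n ψ → IsDelta0 n (φ.imp ψ)
  | bdAll (n : ℕ) (t : lang.Term (α ⊕ Fin n)) {φ : lang.BoundedFormula α (n + 1)} :
      IsDelta0 (n + 1) φ →
      IsDelta0 n
        (BoundedFormula.all ((ltFm (Term.var (Sum.inr (Fin.last n))) (t.liftAt 1 n)).imp φ))

mutual
  /-- Σ_m formulas. -/
  inductive SigmaFm {α : Type} : ℕ → ∀ n : ℕ, lang.BoundedFormula α n → Prop
    | delta0 (m n : ℕ) {φ : lang.BoundedFormula α n} : IsDelta0 n φ → SigmaFm m n φ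
    | ofPi (m n : ℕ) {φ : lang.BoundedFormula α n} : PiFm m n φ → SigmaFm (m + 1) n φ
    | ex (m n : ℕ) {φ : lang.BoundedFormula α (n + 1)} :
        SigmaFm (m + 1) (n + 1) φ → SigmaFm (m + 1) n φ.ex
  /-- Π_m formulas. -/
  inductive PiFm {α : Type} : ℕ → ∀ n : ℕ, lang.BoundedFormula α n → Prop
    | delta0 (m n : ℕ) {φ : lang.BoundedFormula α n} : IsDelta0 n φ → PiFm m n φ
    | ofSigma (m n : ℕ) {φ : lang.BoundedFormula α n} : SigmaFm m n φ → PiFm (m + 1) n φ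
    | all (m n : ℕ) {φ : lang.BoundedFormula α (n + 1)} :
        PiFm (m + 1) (n + 1) φ → PiFm (m + 1) n φ.all
end

/-- A `k`-ary relation on `M` is Σ_m-definable (with parameters from `M`). -/
def IsSigmaDef (m : ℕ) (M : Type) [lang.Structure M] {k : ℕ} (R : (Fin k → M) → Prop) : Prop :=
  ∃ (p : ℕ) (φ : lang.BoundedFormula (Fin k ⊕ Fin p) 0) (w : Fin p → M),
    SigmaFm m 0 φ ∧ ∀ v : Fin k → M, R v ↔ φ.Realize (Sum.elim v w) finZeroElim

/-- A subset of `M` is Σ_m-definable with parameters. -/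
def SigmaDef1 (m : ℕ) (M : Type) [lang.Structure M] (A : Set M) : Prop :=
  IsSigmaDef m M (k := 1) fun v => v 0 ∈ A

/-- A binary relation on `M` is Σ_m-definable with parameters. -/
def SigmaDef2 (m : ℕ) (M : Type) [lang.Structure M] (R : M → M → Prop) : Prop :=
  IsSigmaDef m M (k := 2) fun v => R (v 0) (v 1)

/-- A ternary relation on `M` is Σ_m-definable with parameters. -/
def SigmaDef3 (m : ℕ) (M : Type) [lang.Structure M] (R : M → M → M → Prop) : Prop :=
  IsSigmaDef m M (k := 3) fun v => R (v 0) (v 1) (v 2)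

/-- `M` is a model of PA⁻ (the nonnegative part of a discretely ordered
commutative semiring). -/
structure PAm (M : Type) [lang.Structure M] : Prop where
  add_assoc : ∀ x y z : M, x + y + z = x + (y + z)
  add_comm : ∀ x y : M, x + y = y + x
  mul_assoc : ∀ x y z : M, x * y * z = x * (y * z)
  mul_comm : ∀ x y : M, x * y = y * x
  ldistrib : ∀ x y z : M, x * (y + z) = x * y + x * z
  add_zero : ∀ x : M, x + 0 = x
  mul_zero : ∀ x : M, x * 0 = 0
  mul_one : ∀ x : M, x * 1 = x
  lt_trans : ∀ x y z : M, x < y → y < z → x < z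
  lt_irrefl : ∀ x : M, ¬x < x
  lt_total : ∀ x y : M, x < y ∨ x = y ∨ y < x
  add_lt_add : ∀ x y z : M, x < y → x + z < y + z
  mul_lt_mul : ∀ x y z : M, x < y → 0 < z → x * z < y * z
  sub_exists : ∀ x y : M, x < y → ∃ z, x + z = y
  zero_lt_one : (0 : M) < 1
  discrete : ∀ x : M, 0 < x → (1 : M) ≤ x
  zero_le : ∀ x : M, (0 : M) ≤ x

/-- `M` satisfies the Σ_m-induction scheme (with parameters). -/
def ISig (m : ℕ) (M : Type) [lang.Structure M] : Prop :=
  ∀ A : Set M, SigmaDef1 m M A → (0 : M) ∈ A → (∀ x, x ∈ A → x + 1 ∈ A) → ∀ x, x ∈ A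

/-- `M` satisfies the Σ_m-collection (bounding) scheme (with parameters). -/
def BSig (m : ℕ) (M : Type) [lang.Structure M] : Prop :=
  ∀ R : M → M → Prop, SigmaDef2 m M R → ∀ a : M,
    (∀ x, x < a → ∃ y, R x y) → ∃ b, ∀ x, x < a → ∃ y, y < b ∧ R x y

section Coding

variable {M : Type} [lang.Structure M]

/-- `z` is the Cantor pair `⟨x, y⟩`: `2z = (x+y)(x+y+1) + 2y`. -/
def IsPairC (z x y : M) : Prop := z + z = (x + y) * (x + y + 1) + (y + y)

/-- Gödel's β-function: `x = a mod ((i+1)·b + 1)`. -/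
def BetaC (a b i x : M) : Prop :=
  x < (i + 1) * b + 1 ∧ ∃ q, a = q * ((i + 1) * b + 1) + x

/-- The sequence coded by `s` (via a Cantor pair of β-function data) has value `x`
at place `i`. -/
def SeqAt (s i x : M) : Prop := ∃ a b, IsPairC s a b ∧ BetaC a b i x

/-- `c` codes the M-finite set `X` of cardinality `card`: `c = ⟨card, s⟩` where `s`
codes the strictly increasing enumeration of `X` of length `card`. -/
def CodesFinset (c : M) (X : Set M) (card : M) : Prop :=
  ∃ s, IsPairC c card s ∧
    (∀ i, i < card → ∃ x, x ∈ X ∧ SeqAt s i x) ∧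
    (∀ i j x y, i < j → j < card → SeqAt s i x → SeqAt s j y → x < y) ∧
    (∀ x, x ∈ X ↔ ∃ i, i < card ∧ SeqAt s i x)

/-- `X` is an M-finite (coded) set. -/
def MFinite (X : Set M) : Prop := ∃ c card : M, CodesFinset c X card

/-- `d` codes an `e`-element subset `D` of `[0, y)`, i.e. an element of `[y]^e`. -/
def CodesTupleIn (d e y : M) (D : Set M) : Prop :=
  CodesFinset d D e ∧ ∀ z ∈ D, z < y

/-- `f` codes a (finite) function defined on all of `[0, a)`. -/
def CodesFunOn (f a : M) : Prop :=
  ∀ x, x < a → (∃ y, SeqAt f x y) ∧ ∀ y y', SeqAt f x y → SeqAt f x y' → y = y'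

/-- `X` is an M-coded subset of `[0, a)`. -/
def MCodedSubset (a : M) (X : Set M) : Prop :=
  MFinite X ∧ ∀ x ∈ X, x < a

end Coding

/-- An `M`-ultrafilter on `a`: an ultrafilter of the Boolean algebra of
M-finite subsets of `[0, a)`. -/
structure MUltra (M : Type) [lang.Structure M] (a : M) where
  sets : Set (Set M)
  mem_coded : ∀ X ∈ sets, MCodedSubset a X
  univ_mem : {x : M | x < a} ∈ sets
  superset_mem : ∀ X Y : Set M, X ∈ sets → MCodedSubset a Y → X ⊆ Y → Y ∈ sets
  inter_mem : ∀ X Y : Set M, X ∈ sets → Y ∈ sets → X ∩ Y ∈ sets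
  empty_not_mem : (∅ : Set M) ∉ sets
  ultra : ∀ X : Set M, MCodedSubset a X → X ∈ sets ∨ {x : M | x < a ∧ x ∉ X} ∈ sets

section Principles

variable (M : Type) [lang.Structure M]

/-- `F` is (the graph of) a Σ_m-definable injection from `[0, y)` into `[0, x)`. -/
def SigmaInjRel (m : ℕ) (F : M → M → Prop) (y x : M) : Prop :=
  SigmaDef2 m M F ∧
    (∀ u, u < y → ∃ v, v < x ∧ F u v) ∧
    (∀ u v v', u < y → F u v → F u v' → v = v') ∧
    (∀ u u' v, u < y → u' < y → F u v → F u' v → u = u')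

/-- There exists a Σ_m-definable injection from `[0, y)` into `[0, x)`. -/
def ExSigmaInj (m : ℕ) (y x : M) : Prop := ∃ F : M → M → Prop, SigmaInjRel M m F y x

/-- There exists a Σ_m-definable injection from all of `M` into `[0, a)`. -/
def SigmaInjWhole (m : ℕ) (a : M) : Prop :=
  ∃ F : M → M → Prop, SigmaDef2 m M F ∧
    (∀ u, ∃ v, v < a ∧ F u v) ∧
    (∀ u v v', F u v → F u v' → v = v') ∧
    (∀ u u' v, F u v → F u' v → u = u')

/-- CARD(Σ_m): no Σ_m-definable multivalued map sends `M` injectively below `a`. -/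
def CARD (m : ℕ) : Prop :=
  ∀ F : M → M → Prop, SigmaDef2 m M F → ∀ a : M,
    (∀ x, ∃ y, y < a ∧ F x y) →
      ∃ x0 x1 y, x0 ≠ x1 ∧ y < a ∧ F x0 y ∧ F x1 y

/-- GPHP(Σ_m): for every `x` there is `y` with no Σ_m-definable injection of
`[0,y)` into `[0,x)`. -/
def GPHP (m : ℕ) : Prop := ∀ x : M, ∃ y : M, ¬ExSigmaInj M m y x

/-- WPHP(Σ_m): for `x > 0` there is no Σ_m-definable injection of `[0,2x)` into `[0,x)`. -/
def WPHP (m : ℕ) : Prop := ∀ x : M, 0 < x → ¬ExSigmaInj M m (x + x) x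

/-- `C` is a Σ_m-definable `k`-coloring of `[y]^e` (acting on codes of
`e`-element subsets of `[0,y)`, independently of the chosen code). -/
def IsColoring (m : ℕ) (e y k : M) (C : M → M → Prop) : Prop :=
  SigmaDef2 m M C ∧
    (∀ d D, CodesTupleIn d e y D → ∃ i, i < k ∧ C d i) ∧
    (∀ d d' D i i', CodesTupleIn d e y D → CodesTupleIn d' e y D → C d i → C d' i' → i = i')

/-- FRT^e_k(Σ_m): every Σ_m-definable `k`-coloring of some `[y]^e` has an
M-finite homogeneous set of cardinality `x`, for every `x`. -/
def FRT (m : ℕ) (e k : M) : Prop :=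
  ∀ x : M, ∃ y : M, ∀ C : M → M → Prop, IsColoring M m e y k C →
    ∃ (c : M) (H : Set M), CodesFinset c H x ∧ (∀ z ∈ H, z < y) ∧
      ∃ i, ∀ d D, CodesFinset d D e → D ⊆ H → C d i

/-- fairFRT^e_k(Σ_m): the homogeneous set is required to be given as the range of a
Σ_m-definable injection from `[0,x)` into `[0,y)`. -/
def FairFRT (m : ℕ) (e k : M) : Prop :=
  ∀ x : M, ∃ y : M, ∀ C : M → M → Prop, IsColoring M m e y k C →
    ∃ H : M → M → Prop, SigmaInjRel M m H x y ∧
      ∃ i, ∀ d D, CodesFinset d D e → (∀ z ∈ D, ∃ u, u < x ∧ H u z) → C d i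

/-- `C` is a Σ_m-definable `k`-coloring of `[0, y)`. -/
def IsColoring1 (m : ℕ) (y k : M) (C : M → M → Prop) : Prop :=
  SigmaDef2 m M C ∧
    (∀ z, z < y → ∃ i, i < k ∧ C z i) ∧
    (∀ z i i', z < y → C z i → C z i' → i = i')

/-- FRT¹_k(Σ_m): every Σ_m-definable `k`-coloring of some `[0,y)` has an M-finite
homogeneous set of cardinality `x`, for every `x`. -/
def FRT1 (m : ℕ) (k : M) : Prop :=
  ∀ x : M, ∃ y : M, ∀ C : M → M → Prop, IsColoring1 M m y k C →
    ∃ (c : M) (H : Set M), CodesFinset c H x ∧ (∀ z ∈ H, z < y) ∧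
      ∃ i, ∀ z ∈ H, C z i

/-- fairFRT¹_k(Σ_m). -/
def FairFRT1 (m : ℕ) (k : M) : Prop :=
  ∀ x : M, ∃ y : M, ∀ C : M → M → Prop, IsColoring1 M m y k C →
    ∃ H : M → M → Prop, SigmaInjRel M m H x y ∧
      ∃ i, ∀ u v, u < x → H u v → C v i

end Principles

section Approx

variable {M : Type} [lang.Structure M]

/-- `f` is (the graph of) a partial function. -/
def IsPartialFun (f : M → M → Prop) : Prop := ∀ x y y', f x y → f x y' → y = y'

/-- `s` codes an approximation to the partial function `f` of length `b`. -/
def IsApprox (f : M → M → Prop) (s b : M) : Prop :=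
  (∀ i, i < b → ∃ v, SeqAt s i v) ∧
    (∀ i u v x y, i + 1 < b → SeqAt s i u → SeqAt s (i + 1) v → x ≤ u → f x y → y ≤ v)

/-- `s` codes a `g`-stretched approximation to the partial function `f` of length `b`. -/
def IsStretchedApprox (f g : M → M → Prop) (s b : M) : Prop :=
  (∀ i, i < b → ∃ v, SeqAt s i v) ∧
    (∀ i u w v x y, i + 1 < b → SeqAt s i u → g u w → SeqAt s (i + 1) v →
      x ≤ w → f x y → y ≤ v)

/-- The eventual (limit) value of `fun s => h s ·` is `x`. -/
def EvLim (h : M → M → Prop) (x : M) : Prop := ∃ s : M, ∀ t, s < t → h t x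

end Approx

/-- PΣ_m: every partial Σ_m-definable function admits approximations of every length. -/
def PSig (m : ℕ) (M : Type) [lang.Structure M] : Prop :=
  ∀ f : M → M → Prop, SigmaDef2 m M f → IsPartialFun f → ∀ b : M, ∃ s, IsApprox f s b

section Extensions

variable (M N : Type) [lang.Structure M] [lang.Structure N]

/-- `g : M → N` is Σ_m-elementary: Σ_m formulas with parameters from `M` transfer. -/
def SigmaElem (m : ℕ) (g : M → N) : Prop :=
  ∀ (p : ℕ) (φ : lang.BoundedFormula (Fin p) 0), SigmaFm m 0 φ →
    ∀ v : Fin p → M, (φ.Realize v finZeroElim ↔ φ.Realize (g ∘ v) finZeroElim)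

/-- The extension `g : M → N` is cofinal. -/
def Cofinal (g : M → N) : Prop := ∀ z : N, ∃ x : M, z ≤ g x

/-- `[0,a]^M = [0,a]^N`: every element of `N` below `g a` comes from `M`. -/
def SameBelow (g : M → N) (a : M) : Prop := ∀ z : N, z ≤ g a → ∃ x : M, g x = z

end Extensions

section Ramsey

variable {M : Type} [lang.Structure M]

/-- `f` is an M-coded `k`-coloring of `[y]^e` (assigning colors to codes of
`e`-subsets of `[0,y)`, independently of the code). -/
def CodedColoring (f e y k : M) : Prop :=
  (∀ d D, CodesTupleIn d e y D → ∃ i, i < k ∧ SeqAt f d i) ∧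
    (∀ d d' D i i', CodesTupleIn d e y D → CodesTupleIn d' e y D →
      SeqAt f d i → SeqAt f d' i' → i = i')

/-- The coded coloring `f` of `[y]^e` has an M-coded homogeneous set of cardinality `x`. -/
def CodedHomog (f e y x : M) : Prop :=
  ∃ (c : M) (H : Set M), CodesFinset c H x ∧ (∀ z ∈ H, z < y) ∧
    ∃ i, ∀ d D, CodesFinset d D e → D ⊆ H → SeqAt f d i

/-- `y = r(x, e, k)`: `y` is the least size guaranteeing coded homogeneous sets of
cardinality `x` for all coded `k`-colorings of `e`-subsets. -/
def IsRamsey (x e k y : M) : Prop :=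
  (∀ f, CodedColoring f e y k → CodedHomog f e y x) ∧
    (∀ y', y' < y → ∃ f, CodedColoring f e y' k ∧ ¬CodedHomog f e y' x)

/-- `y = r^(b)(x, e, k)`: the `b`-th iterate of the Ramsey function inside `M`. -/
def IterRamsey (x e k b y : M) : Prop :=
  ∃ s : M, SeqAt s 0 x ∧ SeqAt s b y ∧ (∀ i, i ≤ b → ∃ u, SeqAt s i u) ∧
    (∀ i u v, i < b → SeqAt s i u → SeqAt s (i + 1) v → IsRamsey u e k v)

end Ramsey

end ArithFC

namespace ArithFC

/-! ### Basic algebra of models of PA⁻ -/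

/-- Working assumptions: PA⁻, Σ₁-induction and Σ₁-collection. -/
class PAI (M : Type) [lang.Structure M] : Prop where
  pa : PAm M
  ind : ISig 1 M
  coll : BSig 1 M

section Algebra

variable {M : Type} [lang.Structure M] [PAI M]

instance instCS : CommSemiring M where
  add := Add.add
  mul := Mul.mul
  zero := Zero.zero
  one := One.one
  nsmul := nsmulRec
  npow := npowRec
  add_assoc := PAI.pa.add_assoc
  add_comm := PAI.pa.add_comm
  add_zero := PAI.pa.add_zero
  zero_add x := by rw [PAI.pa.add_comm, PAI.pa.add_zero]
  mul_assoc := PAI.pa.mul_assoc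
  mul_comm := PAI.pa.mul_comm
  mul_one := PAI.pa.mul_one
  one_mul x := by rw [PAI.pa.mul_comm, PAI.pa.mul_one]
  mul_zero := PAI.pa.mul_zero
  zero_mul x := by rw [PAI.pa.mul_comm, PAI.pa.mul_zero]
  left_distrib := PAI.pa.ldistrib
  right_distrib x y z := by
    rw [PAI.pa.mul_comm, PAI.pa.ldistrib, PAI.pa.mul_comm z x, PAI.pa.mul_comm z y]

noncomputable instance instLO : LinearOrder M where
  lt := LT.lt
  le := LE.le
  le_refl x := Or.inr rfl
  le_trans x y z := by
    rintro (h | rfl) (h' | rfl)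
    · exact Or.inl (PAI.pa.lt_trans _ _ _ h h')
    · exact Or.inl h
    · exact Or.inl h'
    · exact Or.inr rfl
  le_antisymm x y := by
    rintro (h | rfl) (h' | h')
    · exact absurd (PAI.pa.lt_trans _ _ _ h h') (PAI.pa.lt_irrefl _)
    · exact h'.symm
    · rfl
    · rfl
  lt_iff_le_not_ge x y := by
    constructor
    · intro h
      refine ⟨Or.inl h, ?_⟩
      rintro (h' | h')
      · exact absurd (PAI.pa.lt_trans _ _ _ h h') (PAI.pa.lt_irrefl _)
      · subst h'; exact absurd h (PAI.pa.lt_irrefl _)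
    · rintro ⟨h | h, h'⟩
      · exact h
      · exact absurd (Or.inr h.symm) h'
  le_total x y := by
    rcases PAI.pa.lt_total x y with h | h | h
    · exact Or.inl (Or.inl h)
    · exact Or.inl (Or.inr h)
    · exact Or.inr (Or.inl h)
  toDecidableLE := Classical.decRel _
  toDecidableEq := Classical.decRel _
  toDecidableLT := Classical.decRel _

theorem zero_le_all (x : M) : 0 ≤ x := PAI.pa.zero_le x

instance : IsOrderedAddMonoid M where
  add_le_add_left x y h z := by
    rcases h with h | rfl
    · exact Or.inl (PAI.pa.add_lt_add _ _ _ h)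
    · exact le_rfl

instance : IsOrderedCancelAddMonoid M where
  le_of_add_le_add_left x y z h := by
    by_contra hc
    have h1 := PAI.pa.add_lt_add _ _ x (not_le.mp hc)
    rw [add_comm z x, add_comm y x] at h1
    exact absurd h (not_le.mpr h1)

instance : IsStrictOrderedRing M where
  zero_le_one := zero_le_all 1
  exists_pair_ne := ⟨0, 1, ne_of_lt (PAI.pa.zero_lt_one : (0 : M) < 1)⟩
  mul_lt_mul_of_pos_left x hx y z h := by
    have := PAI.pa.mul_lt_mul _ _ _ h hx
    rw [mul_comm y, mul_comm z] at this
    exact this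
  mul_lt_mul_of_pos_right x hx y z h := PAI.pa.mul_lt_mul _ _ _ h hx

instance : CanonicallyOrderedAdd M where
  exists_add_of_le {x y} h := by
    rcases h with h | rfl
    · obtain ⟨z, hz⟩ := PAI.pa.sub_exists _ _ h
      exact ⟨z, hz.symm⟩
    · exact ⟨0, (add_zero _).symm⟩
  le_self_add x y := le_add_of_nonneg_right (zero_le_all y)
  le_add_self x y := le_add_of_nonneg_left (zero_le_all y)

theorem lt_iff_succ_le {x y : M} : x < y ↔ x + 1 ≤ y := by
  constructor
  · intro h
    obtain ⟨z, rfl⟩ := PAI.pa.sub_exists _ _ h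
    have hz : z ≠ 0 := by
      rintro rfl
      simp at h
    have := PAI.pa.discrete z (pos_of_ne_zero hz)
    exact add_le_add_right this x
  · intro h
    exact lt_of_lt_of_le (lt_add_one x) h

theorem lt_succ_iff {x y : M} : x < y + 1 ↔ x ≤ y := by
  rw [lt_iff_succ_le]
  exact add_le_add_iff_right 1

theorem exists_pred {x : M} (h : x ≠ 0) : ∃ y, x = y + 1 := by
  have h1 : (1 : M) ≤ x := PAI.pa.discrete x (pos_of_ne_zero h)
  obtain ⟨y, hy⟩ := exists_add_of_le h1
  exact ⟨y, by rw [hy, add_comm]⟩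

end Algebra

end ArithFC
namespace ArithFC

/-! ### Semantic closure properties of the arithmetic hierarchy -/

section Formulas

variable {M : Type} [lang.Structure M]

theorem realize_lift_snoc {β : Type} {l : ℕ} (t : lang.Term (β ⊕ Fin l)) (v : β → M)
    (xs : Fin l → M) (x : M) :
    (t.liftAt 1 l).realize (Sum.elim v (Fin.snoc xs x : Fin (l + 1) → M))
      = t.realize (Sum.elim v xs) := by
  rw [Term.realize_liftAt]
  congr 1
  funext a
  rcases a with a | i
  · rfl
  · simp only [Function.comp, Sum.map_inr, Sum.elim_inr, i.2, if_true]
    exact Fin.snoc_castSucc (α := fun _ => M) x xs i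

theorem term_subst_aux {α : Type} {j : ℕ} (t : lang.Term (α ⊕ Fin j)) :
    ∃ S : Finset α, ∀ (β : Type) (l : ℕ) (σ : α ⊕ Fin j → lang.Term (β ⊕ Fin l)),
      ∀ (v : α → M) (xs : Fin j → M) (v' : β → M) (xs' : Fin l → M),
        (∀ a ∈ S, (σ (Sum.inl a)).realize (Sum.elim v' xs') = v a) →
        (∀ i, (σ (Sum.inr i)).realize (Sum.elim v' xs') = xs i) →
        (t.subst σ).realize (Sum.elim v' xs') = t.realize (Sum.elim v xs) := by
  classical
  induction t with
  | var a =>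
    rcases a with a | i
    · refine ⟨{a}, fun β l σ v xs v' xs' h1 h2 => ?_⟩
      simpa [Term.subst] using h1 a (by simp)
    · refine ⟨∅, fun β l σ v xs v' xs' h1 h2 => ?_⟩
      simpa [Term.subst] using h2 i
  | func f ts ih =>
    choose S hS using ih
    refine ⟨Finset.univ.biUnion S, fun β l σ v xs v' xs' h1 h2 => ?_⟩
    simp only [Term.subst, Term.realize_func]
    congr 1
    funext i
    refine hS i β l σ v xs v' xs' (fun a ha => h1 a ?_) h2
    exact Finset.mem_biUnion.mpr ⟨i, Finset.mem_univ _, ha⟩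

/-- Extension of a substitution under a quantifier. -/
def substUp {α β : Type} {j l : ℕ} (σ : α ⊕ Fin j → lang.Term (β ⊕ Fin l)) :
    α ⊕ Fin (j + 1) → lang.Term (β ⊕ Fin (l + 1)) :=
  Sum.elim (fun a => (σ (Sum.inl a)).liftAt 1 l)
    (Fin.snoc (α := fun _ => lang.Term (β ⊕ Fin (l + 1)))
      (fun i => (σ (Sum.inr i)).liftAt 1 l) (Term.var (Sum.inr (Fin.last l))))

theorem substUp_inr {α β : Type} {j l : ℕ} (σ : α ⊕ Fin j → lang.Term (β ⊕ Fin l))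
    (v' : β → M) (xs' : Fin l → M) (xs : Fin j → M) (x : M)
    (h : ∀ i, (σ (Sum.inr i)).realize (Sum.elim v' xs') = xs i) (i : Fin (j + 1)) :
    (substUp σ (Sum.inr i)).realize (Sum.elim v' (Fin.snoc xs' x : Fin (l + 1) → M))
      = (Fin.snoc xs x : Fin (j + 1) → M) i := by
  refine Fin.lastCases ?_ (fun i => ?_) i
  · simp [substUp]
  · simp [substUp, realize_lift_snoc, h]

/-- The substitution property of a formula, relative to a class of formulas. -/
def SubstProp (M : Type) [lang.Structure M]
    (K : ∀ (β : Type) (l : ℕ), lang.BoundedFormula β l → Prop)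
    {α : Type} {j : ℕ} (φ : lang.BoundedFormula α j) : Prop :=
  ∃ S : Finset α, ∀ (β : Type) (l : ℕ) (σ : α ⊕ Fin j → lang.Term (β ⊕ Fin l)),
    ∃ ψ : lang.BoundedFormula β l, K β l ψ ∧
      ∀ (v : α → M) (xs : Fin j → M) (v' : β → M) (xs' : Fin l → M),
        (∀ a ∈ S, (σ (Sum.inl a)).realize (Sum.elim v' xs') = v a) →
        (∀ i, (σ (Sum.inr i)).realize (Sum.elim v' xs') = xs i) →
        (φ.Realize v xs ↔ ψ.Realize v' xs')

theorem delta0_subst {α : Type} {j : ℕ} {φ : lang.BoundedFormula α j} (h : IsDelta0 j φ) :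
    SubstProp M (fun β l ψ => IsDelta0 (α := β) l ψ) φ := by
  classical
  induction h with
  | falsum n =>
    exact ⟨∅, fun β l σ => ⟨BoundedFormula.falsum, IsDelta0.falsum _, fun _ _ _ _ _ _ => Iff.rfl⟩⟩
  | equal n t u =>
    obtain ⟨S1, h1⟩ := term_subst_aux (M := M) t
    obtain ⟨S2, h2⟩ := term_subst_aux (M := M) u
    refine ⟨S1 ∪ S2, fun β l σ => ⟨BoundedFormula.equal (t.subst σ) (u.subst σ),
      IsDelta0.equal _ _ _, fun v xs v' xs' ha hb => ?_⟩⟩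
    have e1 := h1 β l σ v xs v' xs' (fun a h => ha a (Finset.mem_union_left _ h)) hb
    have e2 := h2 β l σ v xs v' xs' (fun a h => ha a (Finset.mem_union_right _ h)) hb
    simp only [BoundedFormula.Realize]
    rw [e1, e2]
  | rel n l R ts =>
    choose S hS using fun i => term_subst_aux (M := M) (ts i)
    refine ⟨Finset.univ.biUnion S, fun β l σ => ⟨BoundedFormula.rel R (fun i => (ts i).subst σ),
      IsDelta0.rel _ _ _ _, fun v xs v' xs' ha hb => ?_⟩⟩
    simp only [BoundedFormula.Realize]
    have : (fun i => ((ts i).subst σ).realize (Sum.elim v' xs'))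
        = fun i => (ts i).realize (Sum.elim v xs) := by
      funext i
      exact hS i β l σ v xs v' xs' (fun a h => ha a
        (Finset.mem_biUnion.mpr ⟨i, Finset.mem_univ _, h⟩)) hb
    rw [this]
  | imp n _ _ ih1 ih2 =>
    obtain ⟨S1, h1⟩ := ih1
    obtain ⟨S2, h2⟩ := ih2
    refine ⟨S1 ∪ S2, fun β l σ => ?_⟩
    obtain ⟨ψ1, d1, e1⟩ := h1 β l σ
    obtain ⟨ψ2, d2, e2⟩ := h2 β l σ
    refine ⟨ψ1.imp ψ2, IsDelta0.imp _ d1 d2, fun v xs v' xs' ha hb => ?_⟩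
    have e1 := e1 v xs v' xs' (fun a h => ha a (Finset.mem_union_left _ h)) hb
    have e2 := e2 v xs v' xs' (fun a h => ha a (Finset.mem_union_right _ h)) hb
    simp only [BoundedFormula.Realize]
    rw [e1, e2]
  | bdAll n t _ ih =>
    obtain ⟨S1, h1⟩ := term_subst_aux (M := M) t
    obtain ⟨S2, h2⟩ := ih
    refine ⟨S1 ∪ S2, fun β l σ => ?_⟩
    obtain ⟨ψ, d, e⟩ := h2 β (l + 1) (substUp σ)
    refine ⟨_, IsDelta0.bdAll _ (t.subst σ) d, fun v xs v' xs' ha hb => ?_⟩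
    have e1 := h1 β l σ v xs v' xs' (fun a h => ha a (Finset.mem_union_left _ h)) hb
    simp only [BoundedFormula.Realize, ltFm]
    refine forall_congr' fun x => ?_
    have e2 := e v (Fin.snoc xs x) v' (Fin.snoc xs' x) (fun a h => by
      simp only [substUp, Sum.elim_inl]
      rw [realize_lift_snoc]
      exact ha a (Finset.mem_union_right _ h)) (substUp_inr σ v' xs' xs x hb)
    rw [e2]
    refine imp_congr ?_ Iff.rfl
    have q : ∀ (k : ℕ) (γ : Type) (w : γ → M) (ys : Fin k → M) (u : lang.Term (γ ⊕ Fin k)),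
        (fun i => (![(Term.var (Sum.inr (Fin.last k)) : lang.Term (γ ⊕ Fin (k + 1))),
          u.liftAt 1 k] i).realize (Sum.elim w (Fin.snoc ys x : Fin (k + 1) → M)))
        = ![x, u.realize (Sum.elim w ys)] := by
      intro k γ w ys u
      funext i
      refine Fin.cases ?_ (fun i => ?_) i
      · simp
      · refine Fin.cases ?_ (fun i => i.elim0) i
        simpa using realize_lift_snoc u w ys x
    rw [q, q, e1]

theorem subst_all {α : Type} {j : ℕ} {φ : lang.BoundedFormula α (j + 1)}
    (K K' : ∀ (β : Type) (l : ℕ), lang.BoundedFormula β l → Prop)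
    (hK : ∀ β l (ψ : lang.BoundedFormula β (l + 1)), K β (l + 1) ψ → K' β l ψ.all)
    (h : SubstProp M K φ) : SubstProp M K' φ.all := by
  obtain ⟨S2, h2⟩ := h
  refine ⟨S2, fun β l σ => ?_⟩
  obtain ⟨ψ, d, e⟩ := h2 β (l + 1) (substUp σ)
  refine ⟨_, hK _ _ _ d, fun v xs v' xs' ha hb => ?_⟩
  simp only [BoundedFormula.Realize]
  refine forall_congr' fun x => ?_
  exact e v (Fin.snoc xs x) v' (Fin.snoc xs' x) (fun a h => by
      simp only [substUp, Sum.elim_inl]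
      rw [realize_lift_snoc]
      exact ha a h) (substUp_inr σ v' xs' xs x hb)

theorem subst_ex {α : Type} {j : ℕ} {φ : lang.BoundedFormula α (j + 1)}
    (K K' : ∀ (β : Type) (l : ℕ), lang.BoundedFormula β l → Prop)
    (hK : ∀ β l (ψ : lang.BoundedFormula β (l + 1)), K β (l + 1) ψ → K' β l ψ.ex)
    (h : SubstProp M K φ) : SubstProp M K' φ.ex := by
  obtain ⟨S2, h2⟩ := h
  refine ⟨S2, fun β l σ => ?_⟩
  obtain ⟨ψ, d, e⟩ := h2 β (l + 1) (substUp σ)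
  refine ⟨_, hK _ _ _ d, fun v xs v' xs' ha hb => ?_⟩
  simp only [BoundedFormula.realize_ex]
  refine exists_congr fun x => ?_
  exact e v (Fin.snoc xs x) v' (Fin.snoc xs' x) (fun a h => by
      simp only [substUp, Sum.elim_inl]
      rw [realize_lift_snoc]
      exact ha a h) (substUp_inr σ v' xs' xs x hb)

theorem substProp_mono {α : Type} {j : ℕ} {φ : lang.BoundedFormula α j}
    (K K' : ∀ (β : Type) (l : ℕ), lang.BoundedFormula β l → Prop)
    (hK : ∀ β l (ψ : lang.BoundedFormula β l), K β l ψ → K' β l ψ)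
    (h : SubstProp M K φ) : SubstProp M K' φ := by
  obtain ⟨S, h⟩ := h
  refine ⟨S, fun β l σ => ?_⟩
  obtain ⟨ψ, d, e⟩ := h β l σ
  exact ⟨ψ, hK _ _ _ d, e⟩

theorem sigma_subst {α : Type} {m j : ℕ} {φ : lang.BoundedFormula α j} (h : SigmaFm m j φ) :
    SubstProp M (fun β l ψ => SigmaFm (α := β) m l ψ) φ := by
  refine SigmaFm.rec (α := α)
    (motive_1 := fun m j φ _ => SubstProp M (fun β l ψ => SigmaFm (α := β) m l ψ) φ)
    (motive_2 := fun m j φ _ => SubstProp M (fun β l ψ => PiFm (α := β) m l ψ) φ)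
    ?_ ?_ ?_ ?_ ?_ ?_ h
  · intro m n φ h
    exact substProp_mono _ _ (fun β l ψ => SigmaFm.delta0 m l) (delta0_subst h)
  · intro m n φ _ h
    exact substProp_mono _ _ (fun β l ψ => SigmaFm.ofPi m l) h
  · intro m n φ _ h
    exact subst_ex _ _ (fun β l ψ => SigmaFm.ex m l) h
  · intro m n φ h
    exact substProp_mono _ _ (fun β l ψ => PiFm.delta0 m l) (delta0_subst h)
  · intro m n φ _ h
    exact substProp_mono _ _ (fun β l ψ => PiFm.ofSigma m l) h
  · intro m n φ _ h
    exact subst_all _ _ (fun β l ψ => PiFm.all m l) h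

theorem sigma_mono {α : Type} {m j : ℕ} {φ : lang.BoundedFormula α j} (h : SigmaFm m j φ) :
    SigmaFm (m + 1) j φ := by
  refine SigmaFm.rec (α := α)
    (motive_1 := fun m j φ _ => SigmaFm (m + 1) j φ)
    (motive_2 := fun m j φ _ => PiFm (m + 1) j φ)
    ?_ ?_ ?_ ?_ ?_ ?_ h
  · intro m n φ h
    exact SigmaFm.delta0 _ _ h
  · intro m n φ _ h
    exact SigmaFm.ofPi _ _ h
  · intro m n φ _ h
    exact SigmaFm.ex _ _ h
  · intro m n φ h
    exact PiFm.delta0 _ _ h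
  · intro m n φ _ h
    exact PiFm.ofSigma _ _ h
  · intro m n φ _ h
    exact PiFm.all _ _ h

theorem sigma_mono_le {α : Type} {m m' j : ℕ} {φ : lang.BoundedFormula α j} (hm : m ≤ m')
    (h : SigmaFm m j φ) : SigmaFm m' j φ := by
  induction hm with
  | refl => exact h
  | step _ ih => exact sigma_mono ih

theorem ISig_mono {m m' : ℕ} (hm : m ≤ m') (h : ISig m' M) : ISig m M := by
  rintro A ⟨p, φ, w, h1, h2⟩
  exact h A ⟨p, φ, w, sigma_mono_le hm h1, h2⟩

theorem BSig_mono {m m' : ℕ} (hm : m ≤ m') (h : BSig m' M) : BSig m M := by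
  rintro A ⟨p, φ, w, h1, h2⟩
  exact h A ⟨p, φ, w, sigma_mono_le hm h1, h2⟩

/-- Relations on `M^n` defined by Δ₀ formulas with parameters. -/
def DF (n : ℕ) (R : (Fin n → M) → Prop) : Prop :=
  ∃ φ : lang.BoundedFormula M n, IsDelta0 n φ ∧ ∀ xs, R xs ↔ φ.Realize id xs

/-- Relations on `M^n` defined by Σ_m formulas with parameters. -/
def SF (m n : ℕ) (R : (Fin n → M) → Prop) : Prop :=
  ∃ φ : lang.BoundedFormula M n, SigmaFm m n φ ∧ ∀ xs, R xs ↔ φ.Realize id xs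

/-- Relations on `M^n` defined by Π_m formulas with parameters. -/
def PF (m n : ℕ) (R : (Fin n → M) → Prop) : Prop :=
  ∃ φ : lang.BoundedFormula M n, PiFm m n φ ∧ ∀ xs, R xs ↔ φ.Realize id xs

theorem SF_ofDF {m n : ℕ} {R : (Fin n → M) → Prop} (h : DF n R) : SF m n R := by
  obtain ⟨φ, h1, h2⟩ := h
  exact ⟨φ, SigmaFm.delta0 _ _ h1, h2⟩

theorem PF_ofDF {m n : ℕ} {R : (Fin n → M) → Prop} (h : DF n R) : PF m n R := by
  obtain ⟨φ, h1, h2⟩ := h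
  exact ⟨φ, PiFm.delta0 _ _ h1, h2⟩

theorem SF_ofPF {m n : ℕ} {R : (Fin n → M) → Prop} (h : PF m n R) : SF (m + 1) n R := by
  obtain ⟨φ, h1, h2⟩ := h
  exact ⟨φ, SigmaFm.ofPi _ _ h1, h2⟩

theorem PF_ofSF {m n : ℕ} {R : (Fin n → M) → Prop} (h : SF m n R) : PF (m + 1) n R := by
  obtain ⟨φ, h1, h2⟩ := h
  exact ⟨φ, PiFm.ofSigma _ _ h1, h2⟩

theorem SF_congr {m n : ℕ} {R R' : (Fin n → M) → Prop} (h : SF m n R) (e : ∀ xs, R' xs ↔ R xs) :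
    SF m n R' := by
  have : R' = R := by funext xs; exact propext (e xs)
  rwa [this]

theorem PF_congr {m n : ℕ} {R R' : (Fin n → M) → Prop} (h : PF m n R) (e : ∀ xs, R' xs ↔ R xs) :
    PF m n R' := by
  have : R' = R := by funext xs; exact propext (e xs)
  rwa [this]

theorem SF_ex {m n : ℕ} {R : (Fin (n + 1) → M) → Prop} (h : SF (m + 1) (n + 1) R) :
    SF (m + 1) n (fun xs => ∃ x, R (Fin.snoc xs x)) := by
  obtain ⟨φ, h1, h2⟩ := h
  refine ⟨φ.ex, SigmaFm.ex _ _ h1, fun xs => ?_⟩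
  simp [BoundedFormula.realize_ex, h2]

theorem PF_all {m n : ℕ} {R : (Fin (n + 1) → M) → Prop} (h : PF (m + 1) (n + 1) R) :
    PF (m + 1) n (fun xs => ∀ x, R (Fin.snoc xs x)) := by
  obtain ⟨φ, h1, h2⟩ := h
  refine ⟨φ.all, PiFm.all _ _ h1, fun xs => ?_⟩
  simp [BoundedFormula.Realize, h2]

theorem SF_ind {m : ℕ} (motive : ∀ n : ℕ, ((Fin n → M) → Prop) → Prop)
    (base : ∀ n R, PF m n R → motive n R)
    (ex : ∀ n R, motive (n + 1) R → motive n (fun xs => ∃ x, R (Fin.snoc xs x)))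
    {n : ℕ} {R : (Fin n → M) → Prop} (h : SF (m + 1) n R) : motive n R := by
  obtain ⟨φ, h1, h2⟩ := h
  have key : ∀ m', m' = m + 1 → ∀ n (φ : lang.BoundedFormula M n), SigmaFm m' n φ →
      motive n (fun xs => φ.Realize id xs) := by
    intro m' hm' n φ h
    refine SigmaFm.rec (α := M)
      (motive_1 := fun m' n φ _ => m' = m + 1 → motive n (fun xs => φ.Realize id xs))
      (motive_2 := fun m j φ _ => True)
      ?_ ?_ ?_ ?_ ?_ ?_ h hm'
    · intro m' n φ h _
      exact base _ _ ⟨φ, PiFm.delta0 _ _ h, fun xs => Iff.rfl⟩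
    · intro m' n φ h _ e
      obtain rfl : m' = m := by omega
      exact base _ _ ⟨φ, h, fun xs => Iff.rfl⟩
    · intro m' n φ _ ih e
      have := ex _ _ (ih e)
      simpa only [BoundedFormula.realize_ex] using this
    all_goals intros; trivial
  have := key _ rfl n φ h1
  have e : R = fun xs => φ.Realize id xs := by funext xs; exact propext (h2 xs)
  rwa [e]

theorem PF_ind {m : ℕ} (motive : ∀ n : ℕ, ((Fin n → M) → Prop) → Prop)
    (base : ∀ n R, SF m n R → motive n R)
    (all : ∀ n R, motive (n + 1) R → motive n (fun xs => ∀ x, R (Fin.snoc xs x)))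
    {n : ℕ} {R : (Fin n → M) → Prop} (h : PF (m + 1) n R) : motive n R := by
  obtain ⟨φ, h1, h2⟩ := h
  have key : ∀ m', m' = m + 1 → ∀ n (φ : lang.BoundedFormula M n), PiFm m' n φ →
      motive n (fun xs => φ.Realize id xs) := by
    intro m' hm' n φ h
    refine PiFm.rec (α := M)
      (motive_2 := fun m' n φ _ => m' = m + 1 → motive n (fun xs => φ.Realize id xs))
      (motive_1 := fun m j φ _ => True)
      ?_ ?_ ?_ ?_ ?_ ?_ h hm'
    rotate_left 3
    · intro m' n φ h _
      exact base _ _ ⟨φ, SigmaFm.delta0 _ _ h, fun xs => Iff.rfl⟩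
    · intro m' n φ h _ e
      obtain rfl : m' = m := by omega
      exact base _ _ ⟨φ, h, fun xs => Iff.rfl⟩
    · intro m' n φ _ ih e
      exact all _ _ (ih e)
    all_goals intros; trivial
  have := key _ rfl n φ h1
  have e : R = fun xs => φ.Realize id xs := by funext xs; exact propext (h2 xs)
  rwa [e]

theorem SF_zero {n : ℕ} {R : (Fin n → M) → Prop} (h : SF 0 n R) : DF n R := by
  obtain ⟨φ, h1, h2⟩ := h
  cases h1 with
  | delta0 _ _ h => exact ⟨φ, h, h2⟩

theorem PF_zero {n : ℕ} {R : (Fin n → M) → Prop} (h : PF 0 n R) : DF n R := by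
  obtain ⟨φ, h1, h2⟩ := h
  cases h1 with
  | delta0 _ _ h => exact ⟨φ, h, h2⟩

theorem DF_imp {n : ℕ} {R S : (Fin n → M) → Prop} (h : DF n R) (h' : DF n S) :
    DF n (fun xs => R xs → S xs) := by
  obtain ⟨φ, h1, h2⟩ := h
  obtain ⟨φ', h1', h2'⟩ := h'
  refine ⟨φ.imp φ', IsDelta0.imp _ h1 h1', fun xs => ?_⟩
  simp [BoundedFormula.Realize, h2, h2']

theorem DF_not {n : ℕ} {R : (Fin n → M) → Prop} (h : DF n R) : DF n (fun xs => ¬ R xs) :=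
  DF_imp h ⟨BoundedFormula.falsum, IsDelta0.falsum _, fun _ => Iff.rfl⟩

theorem SF_PF_not (m : ℕ) : (∀ n (R : (Fin n → M) → Prop), SF m n R → PF m n (fun xs => ¬ R xs)) ∧
    (∀ n (R : (Fin n → M) → Prop), PF m n R → SF m n (fun xs => ¬ R xs)) := by
  induction m with
  | zero =>
    exact ⟨fun n R h => PF_ofDF (DF_not (SF_zero h)), fun n R h => SF_ofDF (DF_not (PF_zero h))⟩
  | succ m ih =>
    refine ⟨fun n R h => ?_, fun n R h => ?_⟩
    · refine SF_ind (fun n R => PF (m + 1) n (fun xs => ¬ R xs)) ?_ ?_ h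
      · intro n R h
        exact PF_ofSF (ih.2 _ _ h)
      · intro n R h
        exact PF_congr (PF_all h) (fun xs => by simp)
    · refine PF_ind (fun n R => SF (m + 1) n (fun xs => ¬ R xs)) ?_ ?_ h
      · intro n R h
        exact SF_ofPF (ih.1 _ _ h)
      · intro n R h
        exact SF_congr (SF_ex h) (fun xs => by simp)

theorem SF_not {m n : ℕ} {R : (Fin n → M) → Prop} (h : SF m n R) : PF m n (fun xs => ¬ R xs) :=
  (SF_PF_not m).1 _ _ h

theorem PF_not {m n : ℕ} {R : (Fin n → M) → Prop} (h : PF m n R) : SF m n (fun xs => ¬ R xs) :=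
  (SF_PF_not m).2 _ _ h

theorem SF_subst {m n l : ℕ} {R : (Fin n → M) → Prop} (h : SF m n R)
    (σ : Fin n → lang.Term (M ⊕ Fin l)) :
    SF m l (fun ys => R (fun i => (σ i).realize (Sum.elim id ys))) := by
  obtain ⟨φ, h1, h2⟩ := h
  obtain ⟨S, hS⟩ := sigma_subst (M := M) h1
  obtain ⟨ψ, d, e⟩ := hS M l (Sum.elim (fun a => Term.var (Sum.inl a)) σ)
  refine ⟨ψ, d, fun ys => ?_⟩
  refine (h2 _).trans ?_
  exact e id _ id ys (fun a _ => by simp) (fun i => by simp)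

theorem SF_weak {m n : ℕ} {R : (Fin n → M) → Prop} (h : SF m n R) :
    SF m (n + 1) (fun ys => R (Fin.init ys)) := by
  refine SF_congr (SF_subst h (fun i => Term.var (Sum.inr i.castSucc))) (fun xs => ?_)
  simp only [Term.realize_var, Sum.elim_inr]
  rfl

theorem PF_of_not {m n : ℕ} {R : (Fin n → M) → Prop} (h : SF m n (fun xs => ¬ R xs)) :
    PF m n R :=
  PF_congr (SF_not h) (fun xs => by simp)

theorem PF_weak {m n : ℕ} {R : (Fin n → M) → Prop} (h : PF m n R) :
    PF m (n + 1) (fun ys => R (Fin.init ys)) := by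
  exact PF_of_not (SF_weak (PF_not h))

theorem SF_and_or [Nonempty M] (m : ℕ) : ∀ n (R S : (Fin n → M) → Prop), SF m n R → SF m n S →
    SF m n (fun xs => R xs ∧ S xs) ∧ SF m n (fun xs => R xs ∨ S xs) := by
  induction m with
  | zero =>
    intro n R S hR hS
    have hR := SF_zero hR
    have hS := SF_zero hS
    exact ⟨SF_congr (SF_ofDF (DF_not (DF_imp hR (DF_not hS)))) (fun xs => by simp),
      SF_congr (SF_ofDF (DF_imp (DF_not hR) hS)) (fun xs => by tauto)⟩
  | succ m ih =>
    intro n R S hR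
    revert S
    refine SF_ind (fun n R => ∀ S, SF (m + 1) n S →
      SF (m + 1) n (fun xs => R xs ∧ S xs) ∧ SF (m + 1) n (fun xs => R xs ∨ S xs)) ?_ ?_ hR
    · intro n R hR S hS
      revert R
      refine SF_ind (fun n S => ∀ R, PF m n R →
        SF (m + 1) n (fun xs => R xs ∧ S xs) ∧ SF (m + 1) n (fun xs => R xs ∨ S xs)) ?_ ?_ hS
      · intro n S hS R hR
        have := ih _ _ _ (PF_not hR) (PF_not hS)
        exact ⟨SF_congr (SF_ofPF (SF_not this.2)) (fun xs => by tauto),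
          SF_congr (SF_ofPF (SF_not this.1)) (fun xs => by tauto)⟩
      · intro n S hS R hR
        have := hS _ (PF_weak hR)
        refine ⟨SF_congr (SF_ex this.1) (fun xs => by simp),
          SF_congr (SF_ex this.2) (fun xs => by simp [exists_or])⟩
    · intro n R hR S hS
      have := hR _ (SF_weak hS)
      refine ⟨SF_congr (SF_ex this.1) (fun xs => by simp),
          SF_congr (SF_ex this.2) (fun xs => by simp [exists_or])⟩

end Formulas

end ArithFC
namespace ArithFC

/-! ### Definability over environments -/

/-- Environments: types whose elements are finite tuples of elements of `M`. -/
class Env (M : Type) (Γ : Type) where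
  k : ℕ
  get : Γ → Fin k → M

instance envUnit (M : Type) : Env M Unit := ⟨0, fun _ => finZeroElim⟩

instance envProd (M Γ : Type) [Env M Γ] : Env M (Γ × M) :=
  ⟨Env.k M Γ + 1, fun p => Fin.snoc (α := fun _ => M) (Env.get p.1) p.2⟩

/-- Tuples as environments. -/
abbrev envTuple (M : Type) (n : ℕ) : Env M (Fin n → M) := ⟨n, id⟩

section Defs

variable (M : Type) [lang.Structure M] {Γ Δ : Type} [Env M Γ] [Env M Δ]

/-- `R` is Σ_m-definable with parameters. -/
class Sd (m : ℕ) (R : Γ → Prop) : Prop where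
  out : ∃ R' : (Fin (Env.k M Γ) → M) → Prop, SF m _ R' ∧ ∀ γ, R γ ↔ R' (Env.get γ)

/-- `R` is Π_m-definable with parameters. -/
class Pd (m : ℕ) (R : Γ → Prop) : Prop where
  out : ∃ R' : (Fin (Env.k M Γ) → M) → Prop, PF m _ R' ∧ ∀ γ, R γ ↔ R' (Env.get γ)

variable {M}

/-- `f` is given by a term with parameters. -/
class TmF (f : Γ → M) : Prop where
  out : ∃ t : lang.Term (M ⊕ Fin (Env.k M Γ)), ∀ γ, f γ = t.realize (Sum.elim id (Env.get γ))

variable (M)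

/-- All coordinates of `g` are given by terms. -/
class TMap (g : Γ → Δ) : Prop where
  out : ∀ i : Fin (Env.k M Δ), TmF (fun γ => Env.get (M := M) (g γ) i)

end Defs

section Lemmas

variable {M : Type} [lang.Structure M] {Γ Δ : Type} [Env M Γ] [Env M Δ]

instance tmapId : TMap M (fun γ : Γ => γ) :=
  ⟨fun i => ⟨Term.var (Sum.inr i), fun γ => by simp⟩⟩

instance tmapUnit (g : Γ → Unit) : TMap M g :=
  ⟨fun i => i.elim0⟩

instance (priority := low) tmapConst (δ : Δ) : TMap M (fun _ : Γ => δ) :=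
  ⟨fun i => ⟨Term.var (Sum.inl (Env.get δ i)), fun γ => by simp⟩⟩

instance tmapFst (g : Γ → Δ × M) [h : TMap M g] : TMap M (fun γ => (g γ).1) := by
  constructor
  intro i
  obtain ⟨t, ht⟩ := (h.out i.castSucc).out
  refine ⟨t, fun γ => ?_⟩
  rw [← ht]
  exact (Fin.snoc_castSucc (α := fun _ => M) _ _ _).symm

instance tmfSnd (g : Γ → Δ × M) [h : TMap M g] : TmF (fun γ => (g γ).2) := by
  obtain ⟨t, ht⟩ := (h.out (Fin.last _)).out
  refine ⟨t, fun γ => ?_⟩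
  rw [← ht]
  exact (Fin.snoc_last (α := fun _ => M) _ _).symm

instance (priority := low) tmapPair (g : Γ → Δ) (f : Γ → M) [h : TMap M g] [hf : TmF f] :
    TMap M (fun γ => (g γ, f γ)) := by
  constructor
  refine Fin.lastCases ?_ (fun i => ?_)
  · obtain ⟨t, ht⟩ := hf.out
    refine ⟨t, fun γ => ?_⟩
    rw [← ht]
    exact (Fin.snoc_last (α := fun _ => M) _ _)
  · obtain ⟨t, ht⟩ := (h.out i).out
    refine ⟨t, fun γ => ?_⟩
    rw [← ht]
    exact (Fin.snoc_castSucc (α := fun _ => M) _ _ _)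

instance tmfConst (c : M) : TmF (fun _ : Γ => c) :=
  ⟨Term.var (Sum.inl c), fun γ => by simp⟩

instance tmfAdd (f g : Γ → M) [hf : TmF f] [hg : TmF g] : TmF (fun γ => f γ + g γ) := by
  obtain ⟨t, ht⟩ := hf.out
  obtain ⟨u, hu⟩ := hg.out
  refine ⟨Term.func (Func.add : lang.Functions 2) ![t, u], fun γ => ?_⟩
  rw [ht, hu]
  change Structure.funMap (L := lang) Func.add _ = Structure.funMap (L := lang) Func.add _
  congr 1
  funext i
  refine Fin.cases rfl (fun i => Fin.cases rfl (fun i => i.elim0) i) i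

instance tmfMul (f g : Γ → M) [hf : TmF f] [hg : TmF g] : TmF (fun γ => f γ * g γ) := by
  obtain ⟨t, ht⟩ := hf.out
  obtain ⟨u, hu⟩ := hg.out
  refine ⟨Term.func (Func.mul : lang.Functions 2) ![t, u], fun γ => ?_⟩
  rw [ht, hu]
  change Structure.funMap (L := lang) Func.mul _ = Structure.funMap (L := lang) Func.mul _
  congr 1
  funext i
  refine Fin.cases rfl (fun i => Fin.cases rfl (fun i => i.elim0) i) i

theorem Sd.congr {m : ℕ} {R R' : Γ → Prop} (h : Sd M m R) (e : ∀ γ, R' γ ↔ R γ) : Sd M m R' := by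
  have : R' = R := by funext xs; exact propext (e xs)
  rwa [this]

theorem Pd.congr {m : ℕ} {R R' : Γ → Prop} (h : Pd M m R) (e : ∀ γ, R' γ ↔ R γ) : Pd M m R' := by
  have : R' = R := by funext xs; exact propext (e xs)
  rwa [this]

theorem sdNot {m : ℕ} {R : Γ → Prop} (h : Pd M m R) : Sd M m (fun γ => ¬ R γ) := by
  obtain ⟨R', h1, h2⟩ := h
  exact ⟨_, PF_not h1, fun γ => not_congr (h2 γ)⟩

theorem pdNot {m : ℕ} {R : Γ → Prop} (h : Sd M m R) : Pd M m (fun γ => ¬ R γ) := by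
  obtain ⟨R', h1, h2⟩ := h
  exact ⟨_, SF_not h1, fun γ => not_congr (h2 γ)⟩

theorem pdOfNot {m : ℕ} {R : Γ → Prop} (h : Sd M m (fun γ => ¬ R γ)) : Pd M m R :=
  (pdNot h).congr (fun γ => by simp)

theorem sdOfNot {m : ℕ} {R : Γ → Prop} (h : Pd M m (fun γ => ¬ R γ)) : Sd M m R :=
  (sdNot h).congr (fun γ => by simp)

theorem Sd.comp {m : ℕ} {R : Δ → Prop} (h : Sd M m R) (g : Γ → Δ) [hg : TMap M g] :
    Sd M m (fun γ => R (g γ)) := by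
  obtain ⟨R', h1, h2⟩ := h
  choose σ hσ using fun i => (hg.out i).out
  refine ⟨_, SF_subst h1 σ, fun γ => ?_⟩
  rw [h2]
  have : Env.get (M := M) (g γ) = fun i => (σ i).realize (Sum.elim id (Env.get γ)) := by
    funext i
    exact hσ i γ
  rw [this]

theorem Pd.comp {m : ℕ} {R : Δ → Prop} (h : Pd M m R) (g : Γ → Δ) [hg : TMap M g] :
    Pd M m (fun γ => R (g γ)) :=
  pdOfNot ((sdNot h).comp g)

theorem sdOfPd {m : ℕ} {R : Γ → Prop} (h : Pd M m R) : Sd M (m + 1) R := by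
  obtain ⟨R', h1, h2⟩ := h
  exact ⟨_, SF_ofPF h1, h2⟩

theorem pdOfSd {m : ℕ} {R : Γ → Prop} (h : Sd M m R) : Pd M (m + 1) R := by
  obtain ⟨R', h1, h2⟩ := h
  exact ⟨_, PF_ofSF h1, h2⟩

theorem Sd.mono {m m' : ℕ} {R : Γ → Prop} (h : Sd M m R) (hm : m ≤ m') : Sd M m' R := by
  obtain ⟨R', ⟨φ, h1, h3⟩, h2⟩ := h
  exact ⟨R', ⟨φ, sigma_mono_le hm h1, h3⟩, h2⟩

theorem Pd.mono {m m' : ℕ} {R : Γ → Prop} (h : Pd M m R) (hm : m ≤ m') : Pd M m' R :=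
  pdOfNot ((sdNot h).mono hm)

theorem sdEx {m : ℕ} {R : Γ → M → Prop} (h : Sd M (m + 1) (fun p : Γ × M => R p.1 p.2)) :
    Sd M (m + 1) (fun γ => ∃ x, R γ x) := by
  obtain ⟨R', h1, h2⟩ := h
  exact ⟨_, SF_ex h1, fun γ => exists_congr fun x => h2 (γ, x)⟩

/-- Δ₀ relations (used only as a stepping stone). -/
theorem sdEq0 {m : ℕ} (f g : Γ → M) [hf : TmF f] [hg : TmF g] : Sd M m (fun γ => f γ = g γ) := by
  obtain ⟨t, ht⟩ := hf.out
  obtain ⟨u, hu⟩ := hg.out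
  refine ⟨_, ⟨BoundedFormula.equal t u, SigmaFm.delta0 _ _ (IsDelta0.equal _ _ _),
    fun xs => Iff.rfl⟩, fun γ => ?_⟩
  rw [ht, hu]
  rfl

theorem sdLt0 {m : ℕ} (f g : Γ → M) [hf : TmF f] [hg : TmF g] : Sd M m (fun γ => f γ < g γ) := by
  obtain ⟨t, ht⟩ := hf.out
  obtain ⟨u, hu⟩ := hg.out
  refine ⟨_, ⟨ltFm t u, SigmaFm.delta0 _ _ (IsDelta0.rel _ _ _ _),
    fun xs => Iff.rfl⟩, fun γ => ?_⟩
  rw [ht, hu]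
  change Structure.RelMap (L := lang) Rel.lt _ ↔ Structure.RelMap (L := lang) Rel.lt _
  have : ∀ a b : M, a = b → True := fun _ _ _ => trivial
  apply iff_of_eq
  congr 1
  funext i
  refine Fin.cases rfl (fun i => Fin.cases rfl (fun i => i.elim0) i) i

theorem sdFormDelta {m : ℕ} {R : Γ → Prop} (h : Sd M 0 R) : Pd M m R := by
  obtain ⟨R', h1, h2⟩ := h
  exact ⟨R', PF_ofDF (SF_zero h1), h2⟩

theorem pdEq0 {m : ℕ} (f g : Γ → M) [hf : TmF f] [hg : TmF g] : Pd M m (fun γ => f γ = g γ) :=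
  sdFormDelta (sdEq0 f g)

theorem pdLt0 {m : ℕ} (f g : Γ → M) [hf : TmF f] [hg : TmF g] : Pd M m (fun γ => f γ < g γ) :=
  sdFormDelta (sdLt0 f g)

theorem sdBall0 {R : Γ → M → Prop} (h : Sd M 0 (fun p : Γ × M => R p.1 p.2)) (f : Γ → M)
    [hf : TmF f] : Sd M 0 (fun γ => ∀ x, x < f γ → R γ x) := by
  obtain ⟨R', h1, h2⟩ := h
  obtain ⟨φ, h1, h3⟩ := SF_zero h1
  obtain ⟨t, ht⟩ := hf.out
  refine ⟨_, ⟨_, SigmaFm.delta0 _ _ (IsDelta0.bdAll _ t h1), fun xs => Iff.rfl⟩, fun γ => ?_⟩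
  simp only [BoundedFormula.Realize]
  refine forall_congr' fun x => ?_
  refine imp_congr ?_ ((h2 (γ, x)).trans (h3 _))
  rw [ht]
  change Structure.RelMap (L := lang) Rel.lt _ ↔ Structure.RelMap (L := lang) Rel.lt _
  apply iff_of_eq
  congr 1
  funext i
  refine Fin.cases ?_ (fun i => Fin.cases ?_ (fun i => i.elim0) i) i
  · simp
  · simpa using (realize_lift_snoc t id (Env.get γ) x).symm

theorem SF_isSigmaDef {m k : ℕ} {R : (Fin k → M) → Prop} (h : SF m k R) : IsSigmaDef m M R := by
  classical
  obtain ⟨φ, h1, h2⟩ := h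
  obtain ⟨S, hS⟩ := sigma_subst (M := M) h1
  let en := S.equivFin
  obtain ⟨ψ, d, e⟩ := hS (Fin k ⊕ Fin S.card) 0 (Sum.elim
    (fun a => if h : a ∈ S then Term.var (Sum.inl (Sum.inr (en ⟨a, h⟩)))
      else Term.func (Func.zero : lang.Functions 0) ![])
    (fun i => Term.var (Sum.inl (Sum.inl i))))
  refine ⟨S.card, ψ, fun j => (en.symm j).1, d, fun v => ?_⟩
  refine (h2 v).trans (e id v _ _ (fun a ha => ?_) (fun i => ?_))
  · simp [ha]
  · simp

theorem isSigmaDef_SF {m k : ℕ} {R : (Fin k → M) → Prop} (h : IsSigmaDef m M R) : SF m k R := by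
  obtain ⟨p, φ, w, h1, h2⟩ := h
  obtain ⟨S, hS⟩ := sigma_subst (M := M) h1
  obtain ⟨ψ, d, e⟩ := hS M k (Sum.elim
    (Sum.elim (fun i => Term.var (Sum.inr i)) (fun j => Term.var (Sum.inl (w j))))
    finZeroElim)
  refine ⟨ψ, d, fun v => ?_⟩
  refine (h2 v).trans (e _ _ _ _ (fun a ha => ?_) (fun i => i.elim0))
  rcases a with a | a <;> simp

theorem Sd.def1 {m : ℕ} {R : M → Prop} (h : Sd M m (fun p : Unit × M => R p.2)) :
    SigmaDef1 m M {x | R x} := by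
  obtain ⟨R', h1, h2⟩ := h
  have h3 : IsSigmaDef m M R' := SF_isSigmaDef h1
  obtain ⟨p, φ, w, h4, h5⟩ := h3
  refine ⟨p, φ, w, h4, fun v => ?_⟩
  refine Iff.trans ?_ (h5 v)
  refine (h2 ((), v 0)).trans ?_
  apply iff_of_eq
  congr 1
  funext i
  refine Fin.cases rfl (fun i => i.elim0) i

theorem Sd.def2 {m : ℕ} {R : M → M → Prop} (h : Sd M m (fun p : (Unit × M) × M => R p.1.2 p.2)) :
    SigmaDef2 m M R := by
  obtain ⟨R', h1, h2⟩ := h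
  have h3 : IsSigmaDef m M R' := SF_isSigmaDef h1
  obtain ⟨p, φ, w, h4, h5⟩ := h3
  refine ⟨p, φ, w, h4, fun v => ?_⟩
  refine Iff.trans ?_ (h5 v)
  refine (h2 (((), v 0), v 1)).trans ?_
  apply iff_of_eq
  congr 1
  funext i
  refine Fin.cases rfl (fun i => Fin.cases rfl (fun i => i.elim0) i) i

theorem def2_Sd {m : ℕ} {R : M → M → Prop} (h : SigmaDef2 m M R) :
    Sd M m (fun p : (Unit × M) × M => R p.1.2 p.2) :=
  ⟨_, isSigmaDef_SF h, fun _ => Iff.rfl⟩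

end Lemmas

set_option linter.unusedSectionVars false

section Closure

variable {M : Type} [lang.Structure M] [PAI M] {Γ Δ : Type} [Env M Γ] [Env M Δ]

instance nonemptyM : Nonempty M := ⟨0⟩

theorem sdAnd {m : ℕ} {R S : Γ → Prop} (h : Sd M m R) (h' : Sd M m S) :
    Sd M m (fun γ => R γ ∧ S γ) := by
  obtain ⟨R', h1, h2⟩ := h
  obtain ⟨S', h3, h4⟩ := h'
  exact ⟨_, (SF_and_or m _ _ _ h1 h3).1, fun γ => and_congr (h2 γ) (h4 γ)⟩

theorem sdOr {m : ℕ} {R S : Γ → Prop} (h : Sd M m R) (h' : Sd M m S) :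
    Sd M m (fun γ => R γ ∨ S γ) := by
  obtain ⟨R', h1, h2⟩ := h
  obtain ⟨S', h3, h4⟩ := h'
  exact ⟨_, (SF_and_or m _ _ _ h1 h3).2, fun γ => or_congr (h2 γ) (h4 γ)⟩

theorem pdBall0 {m : ℕ} {R : Γ → M → Prop} (h : Pd M m (fun p : Γ × M => R p.1 p.2)) (f : Γ → M)
    [hf : TmF f] : Pd M m (fun γ => ∀ x, x < f γ → R γ x) := by
  have hf' : TmF (fun p : Γ × M => f p.1) := by
    obtain ⟨t, ht⟩ := hf.out
    refine ⟨t.liftAt 1 (Env.k M Γ), fun p => ?_⟩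
    rw [ht]
    exact (realize_lift_snoc t id _ _).symm
  rcases m with _ | m
  · refine sdFormDelta (sdBall0 ?_ f)
    obtain ⟨R', h1, h2⟩ := h
    exact ⟨R', SF_ofDF (PF_zero h1), h2⟩
  · refine pdOfNot ?_
    have := sdEx (R := fun γ x => x < f γ ∧ ¬ R γ x)
      (sdAnd (sdLt0 (fun p : Γ × M => p.2) (fun p => f p.1)) (sdNot h))
    exact this.congr (fun γ => by simp)

/-- Σ_m-collection for environment-definable relations. -/
theorem Sd.collect {m : ℕ} (hB : BSig m M) {R : M → M → Prop}
    (h : Sd M m (fun p : (Unit × M) × M => R p.1.2 p.2)) (a : M) (ha : ∀ x, x < a → ∃ y, R x y) :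
    ∃ b, ∀ x, x < a → ∃ y, y < b ∧ R x y :=
  hB R h.def2 a ha

theorem sdBex0 {m : ℕ} {R : Γ → M → Prop} (h : Sd M m (fun p : Γ × M => R p.1 p.2)) (f : Γ → M)
    [hf : TmF f] : Sd M m (fun γ => ∃ x, x < f γ ∧ R γ x) :=
  sdOfNot ((pdBall0 (R := fun γ x => ¬ R γ x) (pdNot h) f).congr (fun γ => by simp))

/-- Quantifier contraction: a Σ_{m+1} relation is a single existential quantifier
in front of a Π_m relation. -/
theorem Sd.normal {m : ℕ}
    (hbex : ∀ {Γ : Type} [Env M Γ] (R : Γ → M → Prop), Pd M m (fun p : Γ × M => R p.1 p.2) →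
      ∀ (f : Γ → M) [TmF f], Pd M m (fun γ => ∃ x, x < f γ ∧ R γ x))
    {R : Γ → Prop} (h : Sd M (m + 1) R) :
    ∃ P : Γ → M → Prop, Pd M m (fun p : Γ × M => P p.1 p.2) ∧ ∀ γ, R γ ↔ ∃ y, P γ y := by
  obtain ⟨R', h1, h2⟩ := h
  let _ := envTuple M
  have key := SF_ind (m := m) (fun n R' => ∃ P : (Fin n → M) → M → Prop,
    Pd M m (fun p : (Fin n → M) × M => P p.1 p.2) ∧ ∀ xs, R' xs ↔ ∃ y, P xs y) ?_ ?_ h1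
  · obtain ⟨P, h3, h4⟩ := key
    refine ⟨fun γ y => P (Env.get γ) y, ?_, fun γ => (h2 γ).trans (h4 _)⟩
    obtain ⟨P', h5, h6⟩ := h3
    exact ⟨P', h5, fun p => h6 (Env.get p.1, p.2)⟩
  · intro n R hR
    refine ⟨fun xs _ => R xs, ?_, fun xs => by simp⟩
    have : Pd M m R := ⟨R, hR, fun _ => Iff.rfl⟩
    exact this.comp (fun p : (Fin n → M) × M => p.1)
  · rintro n R ⟨P, h3, h4⟩
    refine ⟨fun xs z => ∃ x, x < z + 1 ∧ ∃ y, y < z + 1 ∧ P (Fin.snoc xs x) y, ?_, fun xs => ?_⟩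
    · refine hbex (fun (p : (Fin n → M) × M) x => ∃ y, y < p.2 + 1 ∧ P (Fin.snoc p.1 x) y) ?_
        (fun p => p.2 + 1)
      refine hbex (fun (p : ((Fin n → M) × M) × M) y => P (Fin.snoc p.1.1 p.2) y) ?_
        (fun p => p.1.2 + 1)
      have hm : TMap M (fun p : (((Fin n → M) × M) × M) × M =>
          ((Fin.snoc p.1.1.1 p.1.2 : Fin (n + 1) → M))) := by
        constructor
        refine Fin.lastCases ?_ (fun i => ?_)
        · have : TmF (fun p : (((Fin n → M) × M) × M) × M => p.1.2) := inferInstance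
          obtain ⟨t, ht⟩ := this.out
          exact ⟨t, fun γ => by rw [← ht]; exact Fin.snoc_last (α := fun _ => M) _ _⟩
        · have : TMap M (fun p : (((Fin n → M) × M) × M) × M => p.1.1.1) := inferInstance
          obtain ⟨t, ht⟩ := (this.out i).out
          exact ⟨t, fun γ => by rw [← ht]; exact Fin.snoc_castSucc (α := fun _ => M) _ _ _⟩
      exact h3.comp (fun p : (((Fin n → M) × M) × M) × M =>
          ((Fin.snoc p.1.1.1 p.1.2 : Fin (n + 1) → M), p.2))
    · constructor
      · rintro ⟨x, hx⟩
        obtain ⟨y, hy⟩ := (h4 _).mp hx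
        refine ⟨x + y, x, ?_, y, ?_, hy⟩
        · rw [lt_succ_iff]; exact le_self_add
        · rw [lt_succ_iff]; exact le_add_self
      · rintro ⟨z, x, _, y, _, hy⟩
        exact ⟨x, (h4 _).mpr ⟨y, hy⟩⟩

theorem sdBall_all (m : ℕ) (hB : BSig m M) :
    ∀ {Γ : Type} [Env M Γ] (R : Γ → M → Prop), Sd M m (fun p : Γ × M => R p.1 p.2) →
      ∀ (f : Γ → M) [TmF f], Sd M m (fun γ => ∀ x, x < f γ → R γ x) := by
  induction m with
  | zero =>
    intro Γ _ R h f _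
    exact sdBall0 h f
  | succ m ih =>
    have ih : ∀ {Γ : Type} [Env M Γ] (R : Γ → M → Prop), Sd M m (fun p : Γ × M => R p.1 p.2) →
      ∀ (f : Γ → M) [TmF f], Sd M m (fun γ => ∀ x, x < f γ → R γ x) :=
      ih (BSig_mono (Nat.le_succ m) hB)
    have hbex : ∀ {Γ : Type} [Env M Γ] (R : Γ → M → Prop), Pd M m (fun p : Γ × M => R p.1 p.2) →
      ∀ (f : Γ → M) [TmF f], Pd M m (fun γ => ∃ x, x < f γ ∧ R γ x) := by
      intro Γ _ R h f _
      exact pdOfNot ((ih (fun γ x => ¬ R γ x) (sdNot h) f).congr (fun γ => by simp))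
    intro Γ _ R h f hf
    obtain ⟨P, hP, hR⟩ := h.normal hbex
    have hf' : TmF (fun p : Γ × M => f p.1) := by
      obtain ⟨t, ht⟩ := hf.out
      refine ⟨t.liftAt 1 (Env.k M Γ), fun p => ?_⟩
      rw [ht]
      exact (realize_lift_snoc t id _ _).symm
    have h1 : Sd M (m + 1) (fun γ => ∃ b, ∀ x, x < f γ → ∃ y, y < b ∧ P (γ, x) y) := by
      refine sdEx (sdOfPd ?_)
      refine pdBall0 ?_ (fun p : Γ × M => f p.1)
      refine hbex (fun (p : (Γ × M) × M) y => P (p.1.1, p.2) y) ?_ (fun p => p.1.2)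
      exact hP.comp (fun p : ((Γ × M) × M) × M => ((p.1.1.1, p.1.2), p.2))
    refine h1.congr (fun γ => ?_)
    constructor
    · intro h
      refine Sd.collect (m := m + 1) hB (R := fun x y => P (γ, x) y) ?_ (f γ)
        (fun x hx => (hR (γ, x)).mp (h x hx))
      exact sdOfPd (hP.comp (fun p : (Unit × M) × M => ((γ, p.1.2), p.2)))
    · rintro ⟨b, hb⟩ x hx
      obtain ⟨y, _, hy⟩ := hb x hx
      exact (hR (γ, x)).mpr ⟨y, hy⟩

end Closure

end ArithFC
namespace ArithFC

/-! ### Type-class automation for definability -/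

/-- Levels at which we have collection. -/
class Lv (M : Type) [lang.Structure M] (m : ℕ) : Prop where
  pos : 1 ≤ m
  coll : BSig m M

instance lvOne (M : Type) [lang.Structure M] [h : PAI M] : Lv M 1 := ⟨le_rfl, h.coll⟩

/-- Functions with Σ₁ graph. -/
class Fn {M : Type} [lang.Structure M] {Γ : Type} [Env M Γ] (f : Γ → M) : Prop where
  out : Sd M 1 (fun p : Γ × M => p.2 = f p.1)

set_option linter.unusedSectionVars false
set_option linter.overlappingInstances false

section Auto

variable {M : Type} [lang.Structure M] [PAI M] {Γ Δ : Type} [Env M Γ] [Env M Δ] {m : ℕ} [Lv M m]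

theorem sdExL [hm : Lv M m] {R : Γ → M → Prop} (h : Sd M m (fun p : Γ × M => R p.1 p.2)) :
    Sd M m (fun γ => ∃ x, R γ x) := by
  have := hm.pos
  obtain ⟨m, rfl⟩ : ∃ m', m = m' + 1 := ⟨m - 1, by omega⟩
  exact sdEx h

theorem Sd.ofOne [hm : Lv M m] {R : Γ → Prop} (h : Sd M 1 R) : Sd M m R := h.mono hm.pos

/-- Substituting a definable function. -/
theorem Sd.sub {R : Γ → M → Prop} (h : Sd M m (fun p : Γ × M => R p.1 p.2)) (f : Γ → M)
    [hf : Fn f] : Sd M m (fun γ => R γ (f γ)) := by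
  have := sdExL (R := fun γ x => x = f γ ∧ R γ x) (sdAnd hf.out.ofOne h)
  exact this.congr (fun γ => by simp)

theorem Pd.sub {R : Γ → M → Prop} (h : Pd M m (fun p : Γ × M => R p.1 p.2)) (f : Γ → M)
    [hf : Fn f] : Pd M m (fun γ => R γ (f γ)) :=
  pdOfNot (Sd.sub (R := fun γ x => ¬ R γ x) (sdNot h) f)

theorem tmfWk {f : Γ → M} (hf : TmF f) : TmF (fun p : Γ × M => f p.1) := by
  obtain ⟨t, ht⟩ := hf.out
  refine ⟨t.liftAt 1 (Env.k M Γ), fun p => ?_⟩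
  rw [ht]
  exact (realize_lift_snoc t id _ _).symm

theorem Fn.comp {f : Δ → M} (h : Fn f) (g : Γ → Δ) [hg : TMap M g] : Fn (fun γ => f (g γ)) := by
  have hg' : TMap M (fun p : Γ × M => g p.1) := ⟨fun i => tmfWk (hg.out i)⟩
  exact ⟨h.out.comp (fun p : Γ × M => (g p.1, p.2))⟩

/-- Substituting one definable function into another. -/
theorem Fn.sub {F : Γ → M → M} (h : Fn (fun p : Γ × M => F p.1 p.2)) (f : Γ → M)
    [hf : Fn f] : Fn (fun γ => F γ (f γ)) := by
  constructor
  have hf' : Fn (fun p : Γ × M => f p.1) := hf.comp (fun p : Γ × M => p.1)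
  exact Sd.sub (R := fun (p : Γ × M) x => p.2 = F p.1 x)
    (h.out.comp (fun p : (Γ × M) × M => ((p.1.1, p.2), p.1.2))) (fun p : Γ × M => f p.1)

theorem fnTm (f : Γ → M) [hf : TmF f] : Fn f := by
  have hf' : TmF (fun p : Γ × M => f p.1) := by
    obtain ⟨t, ht⟩ := hf.out
    refine ⟨t.liftAt 1 (Env.k M Γ), fun p => ?_⟩
    rw [ht]
    exact (realize_lift_snoc t id _ _).symm
  exact ⟨sdEq0 _ _⟩

instance fnVar (g : Γ → Δ × M) [TMap M g] : Fn (fun γ => (g γ).2) := fnTm _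

instance fnConst (c : M) : Fn (fun _ : Γ => c) := fnTm _

theorem fn1 {F : M → M} (h : Fn (fun p : Unit × M => F p.2)) (f : Γ → M) [hf : Fn f] :
    Fn (fun γ => F (f γ)) :=
  Fn.sub (F := fun _ x => F x) (h.comp (fun p : Γ × M => ((), p.2))) f

theorem fn2 {F : M → M → M} (h : Fn (fun p : (Unit × M) × M => F p.1.2 p.2)) (f g : Γ → M)
    [hf : Fn f] [hg : Fn g] : Fn (fun γ => F (f γ) (g γ)) := by
  have hg' : Fn (fun p : Γ × M => g p.1) := hg.comp (fun p : Γ × M => p.1)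
  refine Fn.sub (F := fun γ x => F x (g γ)) ?_ f
  refine Fn.sub (F := fun p x => F p.2 x) ?_ (fun p : Γ × M => g p.1)
  exact h.comp (fun p : (Γ × M) × M => (((), p.1.2), p.2))

theorem sd1 {R : M → Prop} (h : Sd M m (fun p : Unit × M => R p.2)) (f : Γ → M)
    [hf : Fn f] : Sd M m (fun γ => R (f γ)) :=
  Sd.sub (R := fun _ x => R x) (h.comp (fun p : Γ × M => ((), p.2))) f

theorem pd1 {R : M → Prop} (h : Pd M m (fun p : Unit × M => R p.2)) (f : Γ → M)
    [hf : Fn f] : Pd M m (fun γ => R (f γ)) :=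
  Pd.sub (R := fun _ x => R x) (h.comp (fun p : Γ × M => ((), p.2))) f

theorem sd2 {R : M → M → Prop} (h : Sd M m (fun p : (Unit × M) × M => R p.1.2 p.2)) (f g : Γ → M)
    [hf : Fn f] [hg : Fn g] : Sd M m (fun γ => R (f γ) (g γ)) := by
  have hg' : Fn (fun p : Γ × M => g p.1) := hg.comp (fun p : Γ × M => p.1)
  refine Sd.sub (R := fun γ x => R x (g γ)) ?_ f
  refine Sd.sub (m := m) (R := fun p x => R p.2 x) ?_ (fun p : Γ × M => g p.1)
  exact h.comp (fun p : (Γ × M) × M => (((), p.1.2), p.2))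

theorem pd2 {R : M → M → Prop} (h : Pd M m (fun p : (Unit × M) × M => R p.1.2 p.2)) (f g : Γ → M)
    [hf : Fn f] [hg : Fn g] : Pd M m (fun γ => R (f γ) (g γ)) :=
  pdOfNot (sd2 (m := m) (R := fun x y => ¬ R x y) (sdNot h) f g)

instance fnAdd (f g : Γ → M) [hf : Fn f] [hg : Fn g] : Fn (fun γ => f γ + g γ) :=
  fn2 (F := fun x y => x + y) (fnTm _) f g

instance fnMul (f g : Γ → M) [hf : Fn f] [hg : Fn g] : Fn (fun γ => f γ * g γ) :=
  fn2 (F := fun x y => x * y) (fnTm _) f g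

instance sdEqI (f g : Γ → M) [hf : Fn f] [hg : Fn g] : Sd M m (fun γ => f γ = g γ) :=
  sd2 (R := fun x y => x = y) (sdEq0 _ _) f g

instance pdEqI (f g : Γ → M) [hf : Fn f] [hg : Fn g] : Pd M m (fun γ => f γ = g γ) :=
  pd2 (R := fun x y => x = y) (pdEq0 _ _) f g

instance sdLtI (f g : Γ → M) [hf : Fn f] [hg : Fn g] : Sd M m (fun γ => f γ < g γ) :=
  sd2 (R := fun x y => x < y) (sdLt0 _ _) f g

instance pdLtI (f g : Γ → M) [hf : Fn f] [hg : Fn g] : Pd M m (fun γ => f γ < g γ) :=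
  pd2 (R := fun x y => x < y) (pdLt0 _ _) f g

instance sdLeI (f g : Γ → M) [hf : Fn f] [hg : Fn g] : Sd M m (fun γ => f γ ≤ g γ) :=
  (sdNot (pdLtI g f)).congr (fun γ => by simp)

instance pdLeI (f g : Γ → M) [hf : Fn f] [hg : Fn g] : Pd M m (fun γ => f γ ≤ g γ) :=
  (pdNot (sdLtI g f)).congr (fun γ => by simp)

instance sdNeI (f g : Γ → M) [hf : Fn f] [hg : Fn g] : Sd M m (fun γ => f γ ≠ g γ) :=
  sdNot (pdEqI f g)

instance pdNeI (f g : Γ → M) [hf : Fn f] [hg : Fn g] : Pd M m (fun γ => f γ ≠ g γ) :=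
  pdNot (sdEqI f g)

instance (priority := low) sdConst (P : Prop) : Sd M m (fun _ : Γ => P) := by
  by_cases h : P
  · exact (sdEq0 (fun _ : Γ => (0 : M)) (fun _ => 0)).congr (fun γ => by simp [h])
  · exact (sdEq0 (fun _ : Γ => (0 : M)) (fun _ => 1)).congr (fun γ => by simp [h])

instance (priority := low) pdConst (P : Prop) : Pd M m (fun _ : Γ => P) :=
  pdOfNot (sdConst _)

section
variable {R S : Γ → Prop}

instance sdNotI [h : Pd M m R] : Sd M m (fun γ => ¬ R γ) := sdNot h
instance pdNotI [h : Sd M m R] : Pd M m (fun γ => ¬ R γ) := pdNot h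
instance sdAndI [h : Sd M m R] [h' : Sd M m S] : Sd M m (fun γ => R γ ∧ S γ) := sdAnd h h'
instance sdOrI [h : Sd M m R] [h' : Sd M m S] : Sd M m (fun γ => R γ ∨ S γ) := sdOr h h'
instance pdAndI [h : Pd M m R] [h' : Pd M m S] : Pd M m (fun γ => R γ ∧ S γ) :=
  pdOfNot ((sdOr (sdNot h) (sdNot h')).congr (fun γ => by tauto))
instance pdOrI [h : Pd M m R] [h' : Pd M m S] : Pd M m (fun γ => R γ ∨ S γ) :=
  pdOfNot ((sdAnd (sdNot h) (sdNot h')).congr (fun γ => by tauto))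
instance sdImpI [h : Pd M m R] [h' : Sd M m S] : Sd M m (fun γ => R γ → S γ) :=
  (sdOr (sdNot h) h').congr (fun γ => by tauto)
instance pdImpI [h : Sd M m R] [h' : Pd M m S] : Pd M m (fun γ => R γ → S γ) :=
  pdOfNot ((sdAnd h (sdNot h')).congr (fun γ => by tauto))
instance sdIffI [h1 : Sd M m R] [h2 : Pd M m R] [h3 : Sd M m S] [h4 : Pd M m S] :
    Sd M m (fun γ => R γ ↔ S γ) :=
  (sdAnd (sdImpI (h := h2) (h' := h3)) (sdImpI (h := h4) (h' := h1))).congr (fun γ => by tauto)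
instance pdIffI [h1 : Sd M m R] [h2 : Pd M m R] [h3 : Sd M m S] [h4 : Pd M m S] :
    Pd M m (fun γ => R γ ↔ S γ) :=
  (pdAndI (h := pdImpI (h := h1) (h' := h4)) (h' := pdImpI (h := h3) (h' := h2))).congr
    (fun γ => by tauto)
end

section
variable {R : Γ → M → Prop}

instance sdExI [h : Sd M m (fun p : Γ × M => R p.1 p.2)] : Sd M m (fun γ => ∃ x, R γ x) := sdExL h

instance pdAllI [h : Pd M m (fun p : Γ × M => R p.1 p.2)] : Pd M m (fun γ => ∀ x, R γ x) :=
  pdOfNot ((sdExL (R := fun γ x => ¬ R γ x) (sdNot h)).congr (fun γ => by simp))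

theorem sdBallL (f : Γ → M) [hf : Fn f] (h : Sd M m (fun p : Γ × M => R p.1 p.2)) :
    Sd M m (fun γ => ∀ x, x < f γ → R γ x) := by
  refine Sd.sub (R := fun γ b => ∀ x, x < b → R γ x) ?_ f
  refine sdBall_all m (Lv.coll) (fun (p : Γ × M) x => R p.1 x) ?_ (fun p => p.2)
  exact h.comp (fun p : (Γ × M) × M => (p.1.1, p.2))

instance sdBallI (f : Γ → M) [hf : Fn f] [h : Sd M m (fun p : Γ × M => R p.1 p.2)] :
    Sd M m (fun γ => ∀ x, x < f γ → R γ x) := sdBallL f h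

instance sdBallLeI (f : Γ → M) [hf : Fn f] [h : Sd M m (fun p : Γ × M => R p.1 p.2)] :
    Sd M m (fun γ => ∀ x, x ≤ f γ → R γ x) :=
  (sdBallL _ (hf := fnAdd f (fun _ => 1)) h).congr (fun γ => by simp only [lt_succ_iff])

instance pdBexI (f : Γ → M) [hf : Fn f] [h : Pd M m (fun p : Γ × M => R p.1 p.2)] :
    Pd M m (fun γ => ∃ x, x < f γ ∧ R γ x) :=
  pdOfNot ((sdBallL (R := fun γ x => ¬ R γ x) f (sdNot h)).congr (fun γ => by simp))

instance pdBexLeI (f : Γ → M) [hf : Fn f] [h : Pd M m (fun p : Γ × M => R p.1 p.2)] :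
    Pd M m (fun γ => ∃ x, x ≤ f γ ∧ R γ x) :=
  pdOfNot ((sdBallLeI (R := fun γ x => ¬ R γ x) f (h := sdNot h)).congr (fun γ => by simp))
end

/-- Functions defined by cases. -/
instance fnIte (P : Γ → Prop) [DecidablePred P] (f g : Γ → M) [h1 : Sd M 1 P] [h2 : Pd M 1 P]
    [hf : Fn f] [hg : Fn g] : Fn (fun γ => if P γ then f γ else g γ) := by
  have h1' : Sd M 1 (fun p : Γ × M => P p.1) := h1.comp (fun p : Γ × M => p.1)
  have h2' : Pd M 1 (fun p : Γ × M => P p.1) := h2.comp (fun p : Γ × M => p.1)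
  have hf' : Fn (fun p : Γ × M => f p.1) := hf.comp (fun p : Γ × M => p.1)
  have hg' : Fn (fun p : Γ × M => g p.1) := hg.comp (fun p : Γ × M => p.1)
  have : Sd M 1 (fun p : Γ × M => (P p.1 ∧ p.2 = f p.1) ∨ (¬ P p.1 ∧ p.2 = g p.1)) := inferInstance
  refine ⟨this.congr (fun p => ?_)⟩
  by_cases h : P p.1 <;> simp [h]

/-- Functions from a Σ₁ graph. -/
theorem Fn.ofGraph {f : Γ → M} {G : Γ → M → Prop} (h : Sd M 1 (fun p : Γ × M => G p.1 p.2))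
    (e : ∀ γ x, G γ x ↔ x = f γ) : Fn f :=
  ⟨h.congr (fun p => (e p.1 p.2).symm)⟩

theorem indm (hI : ISig m M) {R : M → Prop}
    (h0 : R 0) (hs : ∀ x, R x → R (x + 1)) (x : M)
    (h : Sd M m (fun p : Unit × M => R p.2) := by infer_instance) : R x :=
  hI _ h.def1 h0 hs x

end Auto

section Ind

variable {M : Type} [lang.Structure M] [PAI M]

theorem ind1 {R : M → Prop}
    (h0 : R 0) (hs : ∀ x, R x → R (x + 1)) (x : M)
    (h : Sd M 1 (fun p : Unit × M => R p.2) := by infer_instance) : R x :=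
  indm PAI.ind h0 hs x h

theorem not_lt_zero' (x : M) : ¬ x < 0 := not_lt.mpr (zero_le_all x)

theorem sind1 {R : M → Prop}
    (hs : ∀ x, (∀ y, y < x → R y) → R x) (x : M)
    (h : Sd M 1 (fun p : Unit × M => R p.2) := by infer_instance) : R x := by
  have h' : Sd M 1 (fun p : (Unit × M) × M => R p.2) :=
    h.comp (fun p : (Unit × M) × M => ((), p.2))
  have key : ∀ x, ∀ y, y < x → R y := by
    intro x
    refine ind1 (R := fun x => ∀ y, y < x → R y) ?_ ?_ x
    · intro y hy
      exact absurd hy (not_lt_zero' y)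
    · intro x ih y hy
      refine hs y (fun z hz => ih z ?_)
      exact lt_of_lt_of_le hz (lt_succ_iff.mp hy)
  exact key (x + 1) x (lt_succ_iff.mpr le_rfl)

theorem least1 {R : M → Prop}
    (hR : ∃ x, R x)
    (h : Pd M 1 (fun p : Unit × M => R p.2) := by infer_instance) : ∃ x, R x ∧ ∀ y, y < x → ¬ R y := by
  by_contra hc
  push Not at hc
  obtain ⟨x, hx⟩ := hR
  refine sind1 (R := fun x => ¬ R x) ?_ x (sdNot h) hx
  intro x ih hx
  obtain ⟨y, h1, h2⟩ := hc x hx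
  exact ih y h1 h2

/-- bounded induction -/
theorem ind1b {R : M → Prop} (N : M)
    (h0 : R 0) (hs : ∀ x, x < N → R x → R (x + 1)) (x : M) (hx : x ≤ N)
    (h : Sd M 1 (fun p : Unit × M => R p.2) := by infer_instance) : R x := by
  refine ind1 (R := fun x => x ≤ N → R x) ?_ ?_ x inferInstance hx
  · exact fun _ => h0
  · intro x ih hx
    have : x < N := lt_iff_succ_le.mpr hx
    exact hs x this (ih this.le)

end Ind

end ArithFC
namespace ArithFC

/-! ### Coding of sequences by the β-function -/

set_option synthInstance.maxHeartbeats 1000000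
set_option synthInstance.maxSize 4096
set_option maxHeartbeats 1000000

section Beta

variable {M : Type} [lang.Structure M] [PAI M]

theorem succ_pos' (n : M) : 0 < n + 1 := lt_succ_iff.mpr (zero_le_all n)

theorem succ_ne_zero' (n : M) : n + 1 ≠ 0 := (succ_pos' n).ne'

theorem exists_rem (m : M) (hm : 0 < m) (a : M) : ∃ r, r < m ∧ ∃ q, a = q * m + r := by
  refine ind1 (R := fun a => ∃ r, r < m ∧ ∃ q, a = q * m + r) ?_ ?_ a
  · exact ⟨0, hm, 0, by ring⟩
  · rintro a ⟨r, hr, q, rfl⟩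
    rcases (lt_iff_succ_le.mp hr).lt_or_eq with h | h
    · exact ⟨r + 1, h, q, by ring⟩
    · exact ⟨0, hm, q + 1, by rw [← h]; ring⟩

theorem rem_unique_aux {m q q' r r' : M} (hr : r < m) (h : q * m + r = q' * m + r') :
    ¬ q < q' := by
  intro h1
  obtain ⟨d, rfl⟩ := exists_add_of_le (lt_iff_succ_le.mp h1)
  have e : (q + 1 + d) * m + r' = q * m + (m + (d * m + r')) := by ring
  rw [e] at h
  have h2 := add_left_cancel h
  rw [h2] at hr
  exact absurd hr (not_lt.mpr le_self_add)

theorem rem_unique {m q q' r r' : M} (hr : r < m) (hr' : r' < m) (h : q * m + r = q' * m + r') :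
    r = r' := by
  have h1 : q = q' :=
    le_antisymm (not_lt.mp (rem_unique_aux hr' h.symm)) (not_lt.mp (rem_unique_aux hr h))
  subst h1
  exact add_left_cancel h

theorem pair_inj_aux {s a b a' b' : M} (h : IsPairC s a b) (h' : IsPairC s a' b') :
    ¬ a + b < a' + b' := by
  intro hl
  obtain ⟨d, hd⟩ := exists_add_of_le (lt_iff_succ_le.mp hl)
  unfold IsPairC at h h'
  rw [h, hd] at h'
  have h1 : (a + b + 1 + d) * (a + b + 1 + d + 1) + (b' + b') =
      (a + b) * (a + b + 1) + (b + b) + (a + a + 1 + (2 * d * (a + b) + 3 * d + d * d) + (b' + b') + 1) := by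
    ring
  rw [h1] at h'
  have h2 : (a + b) * (a + b + 1) + (b + b) + 0 = _ := (add_zero _).trans h'
  exact absurd (add_left_cancel h2).symm (succ_ne_zero' _)

theorem pair_inj {s a b a' b' : M} (h : IsPairC s a b) (h' : IsPairC s a' b') :
    a = a' ∧ b = b' := by
  have h1 : a + b = a' + b' :=
    le_antisymm (not_lt.mp (pair_inj_aux h' h)) (not_lt.mp (pair_inj_aux h h'))
  unfold IsPairC at h h'
  rw [h, h1] at h'
  have h2 : b + b = b' + b' := add_left_cancel h'
  have : b = b' := by grind
  grind

theorem exists_pair (a b : M) : ∃ s, IsPairC s a b := by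
  have key : ∃ h, h + h = (a + b) * (a + b + 1) := by
    refine ind1 (R := fun t => ∃ h, h + h = t * (t + 1)) ?_ ?_ (a + b)
    · exact ⟨0, by ring⟩
    · rintro t ⟨h, hh⟩
      exact ⟨h + t + 1, by linear_combination hh⟩
  obtain ⟨h, hh⟩ := key
  exact ⟨h + b, by unfold IsPairC; linear_combination hh⟩

theorem le_mul_self' (t : M) : t ≤ t * t := by
  rcases (zero_le_all t).eq_or_lt with h | h
  · rw [← h]; simp
  · calc t = t * 1 := by ring
      _ ≤ t * t := by
        apply mul_le_mul_right
        exact lt_succ_iff.mp (by grind)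

theorem pair_le {s a b : M} (h : IsPairC s a b) : a ≤ s ∧ b ≤ s := by
  unfold IsPairC at h
  have h1 := le_mul_self' (a + b)
  have h2 : (a + b) * (a + b + 1) = (a + b) * (a + b) + (a + b) := by ring
  have h3 := zero_le_all a
  have h4 := zero_le_all b
  constructor <;> grind

theorem seqAt_unique {s i x y : M} (h : SeqAt s i x) (h' : SeqAt s i y) : x = y := by
  obtain ⟨a, b, h1, h2, q, h3⟩ := h
  obtain ⟨a', b', h1', h2', q', h3'⟩ := h'
  obtain ⟨rfl, rfl⟩ := pair_inj h1 h1'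
  exact rem_unique h2 h2' (h3.symm.trans h3')

theorem seqAt_le {s i x : M} (h : SeqAt s i x) : x ≤ s := by
  obtain ⟨a, b, h1, h2, q, h3⟩ := h
  refine le_trans ?_ (pair_le h1).1
  rw [h3]
  exact le_add_self

theorem seqAt_bdd (s i x : M) : SeqAt s i x ↔ ∃ a, a ≤ s ∧ ∃ b, b ≤ s ∧
    (s + s = (a + b) * (a + b + 1) + (b + b)) ∧ x < (i + 1) * b + 1 ∧
    ∃ q, q ≤ s ∧ a = q * ((i + 1) * b + 1) + x := by
  constructor
  · rintro ⟨a, b, h1, h2, q, h3⟩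
    refine ⟨a, (pair_le h1).1, b, (pair_le h1).2, h1, h2, q, ?_, h3⟩
    refine le_trans ?_ (pair_le h1).1
    have := zero_le_all (q * ((i + 1) * b) + x)
    have h4 : a = q + (q * ((i + 1) * b) + x) := by rw [h3]; ring
    rw [h4]
    exact le_self_add
  · rintro ⟨a, _, b, _, h1, h2, q, _, h3⟩
    exact ⟨a, b, h1, h2, q, h3⟩

theorem sdSeqAt0 : Sd M 1 (fun p : ((Unit × M) × M) × M => SeqAt p.1.1.2 p.1.2 p.2) := by
  simp only [seqAt_bdd]
  infer_instance

theorem pdSeqAt0 : Pd M 1 (fun p : ((Unit × M) × M) × M => SeqAt p.1.1.2 p.1.2 p.2) := by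
  simp only [seqAt_bdd]
  infer_instance

open Classical in
/-- The `i`-th entry of the sequence `s` (or `0`). -/
noncomputable def sat (s i : M) : M := if h : ∃ x, SeqAt s i x then h.choose else 0

theorem sat_eq {s i x : M} (h : SeqAt s i x) : sat s i = x := by
  have h' : ∃ x, SeqAt s i x := ⟨x, h⟩
  unfold sat
  rw [dif_pos h']
  exact seqAt_unique h'.choose_spec h

theorem sat_graph (s i x : M) : x = sat s i ↔ SeqAt s i x ∨ (x = 0 ∧ ¬ ∃ y, y ≤ s ∧ SeqAt s i y) := by
  by_cases h : ∃ y, SeqAt s i y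
  · obtain ⟨y, hy⟩ := h
    have : ∃ y, y ≤ s ∧ SeqAt s i y := ⟨y, seqAt_le hy, hy⟩
    rw [sat_eq hy]
    constructor
    · rintro rfl
      exact Or.inl hy
    · rintro (h | ⟨_, h⟩)
      · exact seqAt_unique h hy
      · exact absurd this h
  · have h1 : sat s i = 0 := by unfold sat; rw [dif_neg h]
    rw [h1]
    constructor
    · rintro rfl
      exact Or.inr ⟨rfl, fun ⟨y, _, hy⟩ => h ⟨y, hy⟩⟩
    · rintro (h' | ⟨h', _⟩)
      · exact absurd ⟨x, h'⟩ h
      · exact h'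

theorem fnSat0 : Fn (fun p : (Unit × M) × M => sat p.1.2 p.2) := by
  constructor
  simp only [sat_graph]
  have h1 : Sd M 1 (fun p : ((Unit × M) × M) × M => SeqAt p.1.1.2 p.1.2 p.2) := sdSeqAt0
  have h2 : Pd M 1 (fun p : ((Unit × M) × M) × M => ¬ ∃ y, y ≤ p.1.1.2 ∧ SeqAt p.1.1.2 p.1.2 y) := by
    have := (sdSeqAt0 (M := M)).comp (fun p : (((Unit × M) × M) × M) × M => (p.1.1, p.2))
    infer_instance
  have h3 : Pd M 1 (fun p : (((Unit × M) × M) × M) × M => SeqAt p.1.1.1.2 p.1.1.2 p.2) :=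
    (pdSeqAt0 (M := M)).comp (fun p : (((Unit × M) × M) × M) × M => (p.1.1, p.2))
  infer_instance

instance fnSat {Γ : Type} [Env M Γ] (f g : Γ → M) [Fn f] [Fn g] : Fn (fun γ => sat (f γ) (g γ)) :=
  fn2 (F := sat) fnSat0 f g

/-! #### Chinese remaindering -/

/-- `c` is invertible modulo `m`. -/
def Inv (c m : M) : Prop := ∃ u w, c * u = m * w + 1

theorem Inv.mul {c c' m : M} (h : Inv c m) (h' : Inv c' m) : Inv (c * c') m := by
  obtain ⟨u, w, e⟩ := h
  obtain ⟨u', w', e'⟩ := h'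
  refine ⟨u * u', m * w * w' + w + w', ?_⟩
  calc c * c' * (u * u') = (c * u) * (c' * u') := by ring
    _ = _ := by rw [e, e']; ring

theorem inv_modulus {i d b b' : M} (hb : b ≠ 0) (hd : b = d * b') :
    Inv ((i + 1) * b + 1) ((i + d + 1) * b + 1) := by
  have hw : (i + d + 1) * (i + d + 1) * b * b' * (i + 1) + (i + d + 1) * b ≠ 0 := by
    intro h
    have h1 : (i + d + 1) * (i + d + 1) * b * b' * (i + 1) + (i + d + 1) * b =
      b + ((i + d + 1) * (i + d + 1) * b * b' * (i + 1) + (i + d) * b) := by ring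
    rw [h1] at h
    exact hb (le_antisymm (le_self_add.trans h.le) (zero_le_all b))
  obtain ⟨w, hw⟩ := exists_pred hw
  refine ⟨b' * (i + d + 1) * (i + d + 1) * (i + d + 1) * b, w, ?_⟩
  have h1 : ((i + 1) * b + 1) * (b' * (i + d + 1) * (i + d + 1) * (i + d + 1) * b) +
      ((i + d + 1) * b + 1) = ((i + d + 1) * b + 1) * (w + 1) + 1 := by
    rw [← hw, hd]
    ring
  have h2 : ((i + d + 1) * b + 1) * (w + 1) + 1 =
    ((i + d + 1) * b + 1) * w + 1 + ((i + d + 1) * b + 1) := by ring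
  rw [h2] at h1
  exact add_right_cancel h1

theorem exists_multiple (N : M) : ∃ b, b ≠ 0 ∧ ∀ d, d < N → ∃ q, b = (d + 1) * q := by
  refine ind1 (R := fun N => ∃ b, b ≠ 0 ∧ ∀ d, d < N → ∃ q, b = (d + 1) * q) ?_ ?_ N
  · exact ⟨1, one_ne_zero, fun d hd => absurd hd (not_lt_zero' d)⟩
  · rintro N ⟨b, hb, h⟩
    refine ⟨b * (N + 1), ?_, fun d hd => ?_⟩
    · exact mul_ne_zero hb (succ_ne_zero' N)
    · rcases (lt_succ_iff.mp hd).lt_or_eq with h1 | rfl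
      · obtain ⟨q, hq⟩ := h d h1
        exact ⟨q * (N + 1), by rw [hq]; ring⟩
      · exact ⟨b, by ring⟩

theorem exists_bound {f : M → M} (hf : Fn (fun p : Unit × M => f p.2)) (N : M) :
    ∃ B, ∀ i, i < N → f i ≤ B := by
  have := fun Γ [Env M Γ] (g : Γ → M) [Fn g] => fn1 hf g
  refine ind1 (R := fun N => ∃ B, ∀ i, i < N → f i ≤ B) ?_ ?_ N
  · exact ⟨0, fun d hd => absurd hd (not_lt_zero' d)⟩
  · rintro N ⟨B, h⟩
    refine ⟨B + f N, fun d hd => ?_⟩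
    rcases (lt_succ_iff.mp hd).lt_or_eq with h1 | rfl
    · exact (h d h1).trans le_self_add
    · exact le_add_self

theorem exists_code {f : M → M} (hf : Fn (fun p : Unit × M => f p.2)) (N : M) :
    ∃ s, ∀ i, i < N → SeqAt s i (f i) := by
  have hf' := fun Γ [Env M Γ] (g : Γ → M) [Fn g] => fn1 hf g
  obtain ⟨B, hB⟩ := exists_bound hf N
  obtain ⟨b₀, hb₀, hdiv⟩ := exists_multiple N
  obtain ⟨b, hbdef⟩ : ∃ b, b = b₀ * (B + 1) := ⟨_, rfl⟩
  have hb : b ≠ 0 := by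
    rw [hbdef]
    exact mul_ne_zero hb₀ (succ_ne_zero' B)
  have hB' : B < b := by
    have h0 : (1 : M) ≤ b₀ := by
      have := lt_of_le_of_ne (zero_le_all b₀) (Ne.symm hb₀)
      rw [lt_iff_succ_le] at this
      simpa using this
    obtain ⟨c, rfl⟩ := exists_add_of_le h0
    have e : (1 + c) * (B + 1) = B + 1 + c * (B + 1) := by ring
    rw [hbdef, e]
    exact lt_of_lt_of_le (lt_succ_iff.mpr le_rfl) le_self_add
  have hdiv' : ∀ d, d < N → ∃ q, b = (d + 1) * q := by
    intro d hd
    obtain ⟨q, hq⟩ := hdiv d hd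
    exact ⟨q * (B + 1), by rw [hbdef, hq]; ring⟩
  have key : ∃ a c, (∀ i, i < N → ∃ q, a = q * ((i + 1) * b + 1) + f i) ∧
      (∀ i, i < N → ∃ q, c = q * ((i + 1) * b + 1)) ∧
      (∀ j, j < N → N ≤ j → ∃ u w, c * u = ((j + 1) * b + 1) * w + 1) := by
    refine ind1b (R := fun n => ∃ a c, (∀ i, i < n → ∃ q, a = q * ((i + 1) * b + 1) + f i) ∧
      (∀ i, i < n → ∃ q, c = q * ((i + 1) * b + 1)) ∧
      (∀ j, j < N → n ≤ j → ∃ u w, c * u = ((j + 1) * b + 1) * w + 1)) N ?_ ?_ N le_rfl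
    · refine ⟨0, 1, fun d hd => absurd hd (not_lt_zero' d), fun d hd => absurd hd (not_lt_zero' d),
        fun j _ _ => ⟨1, 0, by ring⟩⟩
    · rintro n hn ⟨a, c, h1, h2, h3⟩
      obtain ⟨u, w, huw⟩ := h3 n hn le_rfl
      refine ⟨a + c * u * (f n + (n + 1) * b * a), c * ((n + 1) * b + 1), ?_, ?_, ?_⟩
      · intro i hi
        rcases (lt_succ_iff.mp hi).lt_or_eq with h | rfl
        · obtain ⟨q, hq⟩ := h1 i h
          obtain ⟨q', hq'⟩ := h2 i h
          refine ⟨q + q' * u * (f n + (n + 1) * b * a), ?_⟩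
          calc a + c * u * (f n + (n + 1) * b * a)
              = (q * ((i + 1) * b + 1) + f i) +
                (q' * ((i + 1) * b + 1)) * u * (f n + (n + 1) * b * a) := by rw [← hq, ← hq']
            _ = _ := by ring
        · refine ⟨w * (f i + (i + 1) * b * a) + a, ?_⟩
          rw [huw]
          ring
      · intro i hi
        rcases (lt_succ_iff.mp hi).lt_or_eq with h | rfl
        · obtain ⟨q', hq'⟩ := h2 i h
          exact ⟨q' * ((n + 1) * b + 1), by rw [hq']; ring⟩
        · exact ⟨c, by ring⟩
      · intro j hj hnj
        have hi1 : Inv c ((j + 1) * b + 1) := h3 j hj (le_trans le_self_add hnj)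
        obtain ⟨d, rfl⟩ := exists_add_of_le hnj
        have hd : d < N := lt_of_le_of_lt le_add_self hj
        obtain ⟨q, hq⟩ := hdiv' d hd
        have hi2 := inv_modulus (i := n) hb hq
        have e : n + (d + 1) + 1 = n + 1 + d + 1 := by ring
        rw [e] at hi2
        exact hi1.mul hi2
  obtain ⟨a, -, h1, -, -⟩ := key
  obtain ⟨s, hs⟩ := exists_pair a b
  refine ⟨s, fun i hi => ⟨a, b, hs, ?_, h1 i hi⟩⟩
  have e : (i + 1) * b + 1 = b + (i * b + 1) := by ring
  rw [e]
  exact lt_of_le_of_lt (hB i hi) (lt_of_lt_of_le hB' le_self_add)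

theorem exists_seq {f : M → M} (hf : Fn (fun p : Unit × M => f p.2)) (N : M) :
    ∃ s, ∀ i, i < N → sat s i = f i := by
  obtain ⟨s, hs⟩ := exists_code hf N
  exact ⟨s, fun i hi => sat_eq (hs i hi)⟩

theorem append_seqAt (s j v : M) :
    ∃ s', (∀ i, i < j → SeqAt s' i (sat s i)) ∧ SeqAt s' j v := by
  classical
  obtain ⟨s', hs'⟩ := exists_code (f := fun i => if i < j then sat s i else v) inferInstance (j + 1)
  refine ⟨s', fun i hi => ?_, ?_⟩
  · have := hs' i (lt_succ_iff.mpr hi.le)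
    rwa [if_pos hi] at this
  · have := hs' j (lt_succ_iff.mpr le_rfl)
    rwa [if_neg (lt_irrefl j)] at this

theorem append_seq (s j v : M) :
    ∃ s', (∀ i, i < j → sat s' i = sat s i) ∧ sat s' j = v := by
  obtain ⟨s', h1, h2⟩ := append_seqAt s j v
  exact ⟨s', fun i hi => sat_eq (h1 i hi), sat_eq h2⟩

/-- Σ_m-choice. -/
theorem choice {m : ℕ} [Lv M m] (hI : ISig m M) {F : M → M → Prop}
    (hF : Sd M m (fun p : (Unit × M) × M => F p.1.2 p.2)) (N : M)
    (h : ∀ i, i < N → ∃ v, F i v) : ∃ s, ∀ i, i < N → F i (sat s i) ∧ SeqAt s i (sat s i) := by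
  have hF' := fun Γ [Env M Γ] (f g : Γ → M) [Fn f] [Fn g] => sd2 hF f g
  have hS' : ∀ (Γ : Type) [Env M Γ] (f g : Γ → M) [Fn f] [Fn g],
      Sd M m (fun γ => SeqAt (f γ) (g γ) (sat (f γ) (g γ))) := by
    intro Γ _ f g _ _
    refine sd2 (R := fun s i => SeqAt s i (sat s i)) ?_ f g
    refine Sd.ofOne (Sd.sub (R := fun (p : (Unit × M) × M) x => SeqAt p.1.2 p.2 x) sdSeqAt0
      (fun p => sat p.1.2 p.2))
  have key := indm hI (R := fun n => n ≤ N → ∃ s, ∀ i, i < n → F i (sat s i) ∧ SeqAt s i (sat s i))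
    ?_ ?_ N
  · exact key le_rfl
  · exact fun _ => ⟨0, fun d hd => absurd hd (not_lt_zero' d)⟩
  · intro n ih hn
    have hn' : n < N := lt_iff_succ_le.mpr hn
    obtain ⟨s, hs⟩ := ih hn'.le
    obtain ⟨v, hv⟩ := h n hn'
    obtain ⟨s', h1, h2⟩ := append_seqAt s n v
    refine ⟨s', fun i hi => ?_⟩
    rcases (lt_succ_iff.mp hi).lt_or_eq with h | rfl
    · rw [sat_eq (h1 i h)]
      exact ⟨(hs i h).1, h1 i h⟩
    · rw [sat_eq h2]
      exact ⟨hv, h2⟩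

end Beta

/-! ### Primitive recursion -/

section PrimRec

variable {M : Type} [lang.Structure M] [PAI M] {Γ : Type} [Env M Γ]

theorem prim_rec (c : Γ → M) (h : Γ → M → M → M) [hc : Fn c]
    (hh : Fn (fun p : (Γ × M) × M => h p.1.1 p.1.2 p.2)) :
    ∃ f : Γ → M → M, (∀ γ, f γ 0 = c γ) ∧ (∀ γ n, f γ (n + 1) = h γ n (f γ n)) ∧
      Fn (fun p : Γ × M => f p.1 p.2) := by
  have ex : ∀ γ n, ∃ s, sat s 0 = c γ ∧ ∀ i, i < n → sat s (i + 1) = h γ i (sat s i) := by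
    intro γ n
    have hh' : Fn (fun p : (Unit × M) × M => h γ p.1.2 p.2) :=
      hh.comp (fun p : (Unit × M) × M => ((γ, p.1.2), p.2))
    have hh'' := fun Γ [Env M Γ] (f g : Γ → M) [Fn f] [Fn g] => fn2 hh' f g
    refine ind1 (R := fun n => ∃ s, sat s 0 = c γ ∧ ∀ i, i < n → sat s (i + 1) = h γ i (sat s i))
      ?_ ?_ n
    · obtain ⟨s, -, hs⟩ := append_seq (0 : M) 0 (c γ)
      exact ⟨s, hs, fun d hd => absurd hd (not_lt_zero' d)⟩
    · rintro n ⟨s, h0, hs⟩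
      obtain ⟨s', h1, h2⟩ := append_seq s (n + 1) (h γ n (sat s n))
      have hz : (0 : M) < n + 1 := lt_succ_iff.mpr (zero_le_all n)
      refine ⟨s', by rw [h1 _ hz, h0], fun i hi => ?_⟩
      rcases (lt_succ_iff.mp hi).lt_or_eq with h | rfl
      · rw [h1 i hi, h1 (i + 1) (by grind), hs i h]
      · rw [h1 i hi, h2]
  have uniq : ∀ γ n s s', sat s 0 = c γ → (∀ i, i < n → sat s (i + 1) = h γ i (sat s i)) →
      sat s' 0 = c γ → (∀ i, i < n → sat s' (i + 1) = h γ i (sat s' i)) →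
      ∀ i, i ≤ n → sat s i = sat s' i := by
    intro γ n s s' h1 h2 h3 h4 i hi
    refine ind1b (R := fun i => sat s i = sat s' i) n ?_ ?_ i hi
    · rw [h1, h3]
    · intro i hi ih
      rw [h2 i hi, h4 i hi, ih]
  choose S hS0 hS using ex
  have val : ∀ γ n s, sat s 0 = c γ → (∀ i, i < n → sat s (i + 1) = h γ i (sat s i)) →
      sat s n = sat (S γ n) n :=
    fun γ n s h1 h2 => uniq γ n s (S γ n) h1 h2 (hS0 γ n) (hS γ n) n le_rfl
  refine ⟨fun γ n => sat (S γ n) n, fun γ => hS0 γ 0, fun γ n => ?_, ?_⟩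
  · have hn : n < n + 1 := lt_succ_iff.mpr le_rfl
    show sat (S γ (n + 1)) (n + 1) = h γ n (sat (S γ n) n)
    rw [hS γ (n + 1) n hn]
    rw [val γ n (S γ (n + 1)) (hS0 _ _) (fun i hi => hS γ (n + 1) i (hi.trans hn))]
  · refine Fn.ofGraph (G := fun p x => ∃ s, sat s 0 = c p.1 ∧
      (∀ i, i < p.2 → sat s (i + 1) = h p.1 i (sat s i)) ∧ x = sat s p.2) ?_ ?_
    · have hc' : Fn (fun p : (((Γ × M) × M) × M) => c p.1.1.1) :=
        hc.comp (fun p : (((Γ × M) × M) × M) => p.1.1.1)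
      have hh' : Fn (fun p : (((Γ × M) × M) × M) × M => h p.1.1.1.1 p.2 (sat p.1.2 p.2)) := by
        refine Fn.sub (F := fun (p : (((Γ × M) × M) × M) × M) x => h p.1.1.1.1 p.2 x) ?_
          (fun p => sat p.1.2 p.2)
        exact hh.comp (fun p : ((((Γ × M) × M) × M) × M) × M => ((p.1.1.1.1.1, p.1.2), p.2))
      infer_instance
    · rintro ⟨γ, n⟩ x
      constructor
      · rintro ⟨s, h1, h2, rfl⟩
        exact val γ n s h1 h2
      · rintro rfl
        exact ⟨S γ n, hS0 γ n, hS γ n, rfl⟩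

end PrimRec

end ArithFC
namespace ArithFC

/-! ### Bitsets -/

set_option synthInstance.maxHeartbeats 1000000
set_option synthInstance.maxSize 4096
set_option maxHeartbeats 1000000

section Pow

variable {M : Type} [lang.Structure M] [PAI M]

theorem lt_succ_self' (n : M) : n < n + 1 := lt_succ_iff.mpr le_rfl

theorem pow_ex (M : Type) [lang.Structure M] [PAI M] :
    ∃ f : Unit × M → M → M, (∀ γ, f γ 0 = 1) ∧ (∀ γ n, f γ (n + 1) = f γ n * γ.2) ∧
      Fn (fun p : (Unit × M) × M => f p.1 p.2) := by
  refine prim_rec (fun _ : Unit × M => (1 : M)) (fun γ _ v => v * γ.2) ?_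
  infer_instance

/-- Exponentiation. -/
noncomputable def pw (b n : M) : M := (pow_ex M).choose ((), b) n

theorem pw_zero (b : M) : pw b 0 = 1 := (pow_ex M).choose_spec.1 _
theorem pw_succ (b n : M) : pw b (n + 1) = pw b n * b := (pow_ex M).choose_spec.2.1 _ _

instance fnPw {Γ : Type} [Env M Γ] (f g : Γ → M) [Fn f] [Fn g] : Fn (fun γ => pw (f γ) (g γ)) :=
  fn2 (F := pw) (pow_ex M).choose_spec.2.2 f g

theorem one_le_of_pos {b : M} (h : 0 < b) : 1 ≤ b := by
  have := lt_iff_succ_le.mp h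
  rwa [zero_add] at this

theorem pw_pos {b : M} (hb : 0 < b) (n : M) : 0 < pw b n := by
  refine ind1 (R := fun n => 0 < pw b n) ?_ ?_ n
  · rw [pw_zero]; exact zero_lt_one
  · intro n ih
    rw [pw_succ]
    exact mul_pos ih hb

theorem pw_add (b n d : M) : pw b (n + d) = pw b n * pw b d := by
  refine ind1 (R := fun d => pw b (n + d) = pw b n * pw b d) ?_ ?_ d
  · rw [pw_zero, add_zero, mul_one]
  · intro d ih
    rw [← add_assoc, pw_succ, pw_succ, ih, mul_assoc]

theorem pw_mono {b n m : M} (hb : 0 < b) (h : n ≤ m) : pw b n ≤ pw b m := by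
  obtain ⟨d, rfl⟩ := exists_add_of_le h
  rw [pw_add]
  calc pw b n = pw b n * 1 := (mul_one _).symm
    _ ≤ pw b n * pw b d := mul_le_mul_right (one_le_of_pos (pw_pos hb d)) _

/-- Powers of two. -/
noncomputable def p2 (n : M) : M := pw (1 + 1) n

instance fnP2 {Γ : Type} [Env M Γ] (f : Γ → M) [Fn f] : Fn (fun γ => p2 (f γ)) := by
  unfold p2
  infer_instance

theorem two_pos' : (0 : M) < 1 + 1 := succ_pos' 1
theorem p2_pos (n : M) : 0 < p2 n := pw_pos two_pos' n
theorem p2_zero : p2 (0 : M) = 1 := pw_zero _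
theorem p2_succ (n : M) : p2 (n + 1) = p2 n + p2 n := by
  unfold p2
  rw [pw_succ]; ring
theorem p2_add (n d : M) : p2 (n + d) = p2 n * p2 d := pw_add _ _ _
theorem p2_mono {n m : M} (h : n ≤ m) : p2 n ≤ p2 m := pw_mono two_pos' h

theorem lt_p2 (n : M) : n < p2 n := by
  refine ind1 (R := fun n => n < p2 n) ?_ ?_ n
  · rw [p2_zero]; exact zero_lt_one
  · intro n ih
    rw [p2_succ]
    calc n + 1 ≤ p2 n := lt_iff_succ_le.mp ih
      _ < p2 n + p2 n := lt_add_of_pos_right _ (p2_pos n)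

/-- `x` is an element of the bitset `s`. -/
def Mem (x s : M) : Prop := ∃ q, q ≤ s ∧ ∃ r, r < p2 x ∧ s = (q + q + 1) * p2 x + r

instance sdMem {Γ : Type} [Env M Γ] {m : ℕ} [Lv M m] (f g : Γ → M) [Fn f] [Fn g] :
    Sd M m (fun γ => Mem (f γ) (g γ)) := by
  refine sd2 (R := Mem) ?_ f g
  unfold Mem
  infer_instance

instance pdMem {Γ : Type} [Env M Γ] {m : ℕ} [Lv M m] (f g : Γ → M) [Fn f] [Fn g] :
    Pd M m (fun γ => Mem (f γ) (g γ)) := by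
  refine pd2 (R := Mem) ?_ f g
  unfold Mem
  infer_instance

theorem le_mul_pos {a b : M} (hb : 0 < b) : a ≤ a * b :=
  calc a = a * 1 := (mul_one _).symm
    _ ≤ a * b := mul_le_mul_right (one_le_of_pos hb) _

theorem mem_iff (x s : M) : Mem x s ↔ ∃ q r, r < p2 x ∧ s = (q + q + 1) * p2 x + r := by
  constructor
  · rintro ⟨q, _, r, hr, h⟩
    exact ⟨q, r, hr, h⟩
  · rintro ⟨q, r, hr, h⟩
    refine ⟨q, ?_, r, hr, h⟩
    rw [h]
    calc q ≤ q + (q + 1) := le_self_add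
      _ = q + q + 1 := by ring
      _ ≤ (q + q + 1) * p2 x := le_mul_pos (p2_pos x)
      _ ≤ _ := le_self_add

theorem p2_le_of_mem {x s : M} (h : Mem x s) : p2 x ≤ s := by
  obtain ⟨q, _, r, hr, h⟩ := h
  have e : (q + q + 1) * p2 x + r = p2 x + ((q + q) * p2 x + r) := by ring
  rw [h, e]
  exact le_self_add

theorem mem_lt {x s : M} (h : Mem x s) : x < s := lt_of_lt_of_le (lt_p2 x) (p2_le_of_mem h)

theorem mem_lt_of_lt {x s n : M} (h : Mem x s) (hs : s < p2 n) : x < n := by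
  by_contra hc
  exact absurd (lt_of_le_of_lt ((p2_mono (not_lt.mp hc)).trans (p2_le_of_mem h)) hs) (lt_irrefl _)

theorem not_mem_zero (x : M) : ¬ Mem x 0 := fun h => not_lt_zero' _ (mem_lt h)

theorem odd_cancel {Q q c : M} (h : Q + (c + c) = q + q + 1) : ∃ q', Q = q' + q' + 1 := by
  have hc : c ≤ q := by
    by_contra hc
    obtain ⟨d, rfl⟩ := exists_add_of_le (lt_iff_succ_le.mp (not_le.mp hc))
    have e : Q + (q + 1 + d + (q + 1 + d)) = q + q + 1 + (Q + d + d + 1) := by ring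
    rw [e] at h
    have h2 : q + q + 1 + (Q + d + d + 1) = q + q + 1 + 0 := by rw [h, add_zero]
    exact succ_ne_zero' _ (add_left_cancel h2)
  obtain ⟨d, rfl⟩ := exists_add_of_le hc
  refine ⟨d, ?_⟩
  have e : c + d + (c + d) + 1 = (d + d + 1) + (c + c) := by ring
  rw [e] at h
  exact add_right_cancel h

theorem mem_add {n s : M} (hs : s < p2 n) (x : M) : Mem x (p2 n + s) ↔ x = n ∨ Mem x s := by
  have hlt : p2 n + s < p2 (n + 1) := by
    rw [p2_succ]
    exact add_lt_add_right hs _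
  rcases lt_trichotomy x n with h | rfl | h
  · have hx : x ≠ n := h.ne
    obtain ⟨d, rfl⟩ := exists_add_of_le (lt_iff_succ_le.mp h)
    have e : p2 (x + 1 + d) = (p2 d + p2 d) * p2 x := by
      rw [p2_add, p2_succ]; ring
    rw [e]
    simp only [hx, false_or]
    rw [mem_iff, mem_iff]
    constructor
    · rintro ⟨q, r, hr, hq⟩
      obtain ⟨r', hr', Q, hQ⟩ := exists_rem (p2 x) (p2_pos x) s
      have h1 : (Q + (p2 d + p2 d)) * p2 x + r' = (q + q + 1) * p2 x + r := by
        rw [← hq, hQ]; ring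
      have h2 := rem_unique hr' hr h1
      rw [h2] at h1
      have h3 := mul_right_cancel₀ (p2_pos x).ne' (add_right_cancel h1)
      obtain ⟨q', hq'⟩ := odd_cancel h3
      exact ⟨q', r', hr', by rw [hQ, hq']⟩
    · rintro ⟨q, r, hr, hq⟩
      exact ⟨q + p2 d, r, hr, by rw [hq]; ring⟩
  · simp only [true_or, iff_true]
    rw [mem_iff]
    exact ⟨0, s, hs, by ring⟩
  · constructor
    · intro h'
      exact absurd (mem_lt_of_lt h' hlt) (not_lt.mpr (lt_iff_succ_le.mp h))
    · rintro (h' | h')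
      · exact absurd h' h.ne'
      · exact absurd (mem_lt_of_lt h' hs) (not_lt.mpr h.le)

theorem split_p2 {s n : M} (h : s < p2 (n + 1)) : s < p2 n ∨ ∃ t, t < p2 n ∧ s = p2 n + t := by
  rcases lt_or_ge s (p2 n) with h1 | h1
  · exact Or.inl h1
  · obtain ⟨t, rfl⟩ := exists_add_of_le h1
    rw [p2_succ] at h
    exact Or.inr ⟨t, lt_of_add_lt_add_left h, rfl⟩

theorem mem_ext_aux (n : M) : ∀ s, s < p2 n → ∀ t, t < p2 n →
    (∀ x, x < n → (Mem x s ↔ Mem x t)) → s = t := by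
  have key := ind1 (R := fun n => ∀ s, s < p2 n → ∀ t, t < p2 n →
    (∃ x, x < n ∧ ((Mem x s ∧ ¬ Mem x t) ∨ (¬ Mem x s ∧ Mem x t))) ∨ s = t) ?_ ?_ n
  · intro s hs t ht hx
    rcases key s hs t ht with ⟨x, hx', h⟩ | h
    · have := hx x hx'
      tauto
    · exact h
  · intro s hs t ht
    rw [p2_zero] at hs ht
    have e : (1 : M) = 0 + 1 := (zero_add 1).symm
    rw [e, lt_succ_iff] at hs ht
    right
    rw [le_antisymm hs (zero_le_all s), le_antisymm ht (zero_le_all t)]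
  · intro n ih s hs t ht
    have hn : n < n + 1 := lt_succ_self' n
    have hnm : ∀ s, s < p2 n → ¬ Mem n s := fun s h h' => lt_irrefl _ (mem_lt_of_lt h' h)
    have up : ∀ s t, s < p2 n → t < p2 n → s ≠ t →
        ∃ x, x < n ∧ ((Mem x s ∧ ¬ Mem x t) ∨ (¬ Mem x s ∧ Mem x t)) := by
      intro s t hs ht hne
      rcases ih s hs t ht with h | h
      · exact h
      · exact absurd h hne
    rcases split_p2 hs with h1 | ⟨s', h1, rfl⟩ <;> rcases split_p2 ht with h2 | ⟨t', h2, rfl⟩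
    · rcases ih s h1 t h2 with ⟨x, hx, h⟩ | h
      · exact Or.inl ⟨x, hx.trans hn, h⟩
      · exact Or.inr h
    · exact Or.inl ⟨n, hn, Or.inr ⟨hnm s h1, (mem_add h2 n).mpr (Or.inl rfl)⟩⟩
    · exact Or.inl ⟨n, hn, Or.inl ⟨(mem_add h1 n).mpr (Or.inl rfl), hnm t h2⟩⟩
    · rcases ih s' h1 t' h2 with ⟨x, hx, h⟩ | h
      · refine Or.inl ⟨x, hx.trans hn, ?_⟩
        rw [mem_add h1, mem_add h2]
        have := hx.ne
        tauto
      · exact Or.inr (by rw [h])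

theorem mem_ext {s t : M} (h : ∀ x, Mem x s ↔ Mem x t) : s = t := by
  refine mem_ext_aux (s + t) s ?_ t ?_ (fun x _ => h x)
  · exact lt_of_lt_of_le (lt_p2 s) (p2_mono le_self_add)
  · exact lt_of_lt_of_le (lt_p2 t) (p2_mono le_add_self)

theorem compr {R : M → Prop} (n : M) (hs : Sd M 1 (fun p : Unit × M => R p.2) := by infer_instance)
    (hp : Pd M 1 (fun p : Unit × M => R p.2) := by infer_instance) :
    ∃ s, s < p2 n ∧ ∀ x, Mem x s ↔ x < n ∧ R x := by
  have hs' := fun Γ [Env M Γ] (f : Γ → M) [Fn f] => sd1 hs f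
  have hp' := fun Γ [Env M Γ] (f : Γ → M) [Fn f] => pd1 hp f
  have key : ∃ s, s < p2 n ∧ ∀ x, x < n → (Mem x s ↔ R x) := by
    refine ind1 (R := fun n => ∃ s, s < p2 n ∧ ∀ x, x < n → (Mem x s ↔ R x)) ?_ ?_ n
    · exact ⟨0, p2_pos 0, fun x hx => absurd hx (not_lt_zero' x)⟩
    · rintro n ⟨s, h1, h2⟩
      by_cases h : R n
      · refine ⟨p2 n + s, by rw [p2_succ]; exact add_lt_add_right h1 _, fun x hx => ?_⟩
        rw [mem_add h1]
        rcases (lt_succ_iff.mp hx).lt_or_eq with h3 | rfl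
        · rw [h2 x h3]
          have := h3.ne
          tauto
        · simp [h]
      · refine ⟨s, h1.trans_le (p2_mono (lt_succ_self' n).le), fun x hx => ?_⟩
        rcases (lt_succ_iff.mp hx).lt_or_eq with h3 | rfl
        · exact h2 x h3
        · have : ¬ Mem x s := fun h => lt_irrefl _ (mem_lt_of_lt h h1)
          tauto
  obtain ⟨s, h1, h2⟩ := key
  refine ⟨s, h1, fun x => ⟨fun h => ?_, fun h => (h2 x h.1).mpr h.2⟩⟩
  have := mem_lt_of_lt h h1
  exact ⟨this, (h2 x this).mp h⟩

theorem lt_p2_of_mem {u n : M} (h : ∀ x, Mem x u → x < n) : u < p2 n := by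
  obtain ⟨s, h1, h2⟩ := compr (R := fun x => Mem x u) n
  have : u = s := mem_ext (fun x => by rw [h2]; exact ⟨fun h' => ⟨h x h', h'⟩, fun h' => h'.2⟩)
  rwa [this]

/-- Inclusion of bitsets. -/
def Sub (s t : M) : Prop := ∀ x, Mem x s → Mem x t

theorem Sub.trans {s t u : M} (h : Sub s t) (h' : Sub t u) : Sub s u := fun x hx => h' x (h x hx)
theorem Sub.rfl {s : M} : Sub s s := fun _ h => h

theorem Sub.lt {s t : M} (h : Sub s t) : s < p2 t := lt_p2_of_mem (fun x hx => mem_lt (h x hx))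

section Inst

variable {Γ : Type} [Env M Γ] {m : ℕ} [Lv M m]

instance sdBallMemI {R : Γ → M → Prop} (f : Γ → M) [Fn f]
    [h : Sd M m (fun p : Γ × M => R p.1 p.2)] : Sd M m (fun γ => ∀ x, Mem x (f γ) → R γ x) := by
  have hf : Fn (fun p : Γ × M => f p.1) := (inferInstance : Fn f).comp (fun p : Γ × M => p.1)
  have : Sd M m (fun γ => ∀ x, x < f γ → (Mem x (f γ) → R γ x)) := inferInstance
  exact this.congr (fun γ => ⟨fun h x _ hx => h x hx, fun h x hx => h x (mem_lt hx) hx⟩)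

instance pdBexMemI {R : Γ → M → Prop} (f : Γ → M) [Fn f]
    [h : Pd M m (fun p : Γ × M => R p.1 p.2)] : Pd M m (fun γ => ∃ x, Mem x (f γ) ∧ R γ x) := by
  have hf : Fn (fun p : Γ × M => f p.1) := (inferInstance : Fn f).comp (fun p : Γ × M => p.1)
  have : Pd M m (fun γ => ∃ x, x < f γ ∧ (Mem x (f γ) ∧ R γ x)) := inferInstance
  exact this.congr (fun γ => ⟨fun ⟨x, h, h'⟩ => ⟨x, mem_lt h, h, h'⟩, fun ⟨x, _, h⟩ => ⟨x, h⟩⟩)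

instance sdSub (f g : Γ → M) [hf : Fn f] [hg : Fn g] : Sd M m (fun γ => Sub (f γ) (g γ)) := by
  refine sd2 (R := Sub) ?_ f g
  unfold Sub
  infer_instance

instance pdSub (f g : Γ → M) [hf : Fn f] [hg : Fn g] : Pd M m (fun γ => Sub (f γ) (g γ)) := by
  refine pd2 (R := Sub) ?_ f g
  unfold Sub
  infer_instance

instance sdBallSubI {R : Γ → M → Prop} (f : Γ → M) [Fn f]
    [h : Sd M m (fun p : Γ × M => R p.1 p.2)] : Sd M m (fun γ => ∀ x, Sub x (f γ) → R γ x) := by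
  have hf : Fn (fun p : Γ × M => f p.1) := (inferInstance : Fn f).comp (fun p : Γ × M => p.1)
  have : Sd M m (fun γ => ∀ x, x < p2 (f γ) → (Sub x (f γ) → R γ x)) := inferInstance
  exact this.congr (fun γ => ⟨fun h x _ hx => h x hx, fun h x hx => h x (Sub.lt hx) hx⟩)

end Inst

/-- `p` is above all elements of `u`. -/
def Above (u p : M) : Prop := ∀ x, Mem x u → x < p

instance sdAbove {Γ : Type} [Env M Γ] {m : ℕ} [Lv M m] (f g : Γ → M) [hf : Fn f] [hg : Fn g] :
    Sd M m (fun γ => Above (f γ) (g γ)) := by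
  refine sd2 (R := Above) ?_ f g
  unfold Above
  infer_instance

instance pdAbove {Γ : Type} [Env M Γ] {m : ℕ} [Lv M m] (f g : Γ → M) [hf : Fn f] [hg : Fn g] :
    Pd M m (fun γ => Above (f γ) (g γ)) := by
  refine pd2 (R := Above) ?_ f g
  unfold Above
  infer_instance

theorem ins_ex (u p : M) : ∃ w, ∀ x, Mem x w ↔ x = p ∨ Mem x u := by
  obtain ⟨w, -, h⟩ := compr (R := fun x => x = p ∨ Mem x u) (u + p + 1)
  refine ⟨w, fun x => (h x).trans ⟨fun h => h.2, fun h => ⟨?_, h⟩⟩⟩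
  rw [lt_succ_iff]
  rcases h with rfl | h
  · exact le_add_self
  · exact (mem_lt h).le.trans le_self_add

/-- Insertion of an element. -/
noncomputable def ins (u p : M) : M := (ins_ex u p).choose

theorem mem_ins {u p x : M} : Mem x (ins u p) ↔ x = p ∨ Mem x u := (ins_ex u p).choose_spec x

instance fnIns {Γ : Type} [Env M Γ] (f g : Γ → M) [hf : Fn f] [hg : Fn g] :
    Fn (fun γ => ins (f γ) (g γ)) := by
  refine fn2 (F := ins) ?_ f g
  refine Fn.ofGraph (G := fun p w => (∀ x, Mem x w → (x = p.2 ∨ Mem x p.1.2)) ∧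
    Mem p.2 w ∧ (∀ x, Mem x p.1.2 → Mem x w)) inferInstance ?_
  rintro ⟨⟨_, u⟩, p⟩ w
  constructor
  · rintro ⟨h1, h2, h3⟩
    refine mem_ext (fun x => ?_)
    rw [mem_ins]
    refine ⟨h1 x, ?_⟩
    rintro (rfl | h)
    · exact h2
    · exact h3 x h
  · rintro rfl
    exact ⟨fun x => mem_ins.mp, mem_ins.mpr (Or.inl rfl), fun x h => mem_ins.mpr (Or.inr h)⟩

end Pow

/-! #### Cardinality -/

section Card

variable {M : Type} [lang.Structure M] [PAI M]

open Classical in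
theorem cnt_ex (M : Type) [lang.Structure M] [PAI M] :
    ∃ f : Unit × M → M → M, (∀ γ, f γ 0 = 0) ∧
      (∀ γ n, f γ (n + 1) = if Mem n γ.2 then f γ n + 1 else f γ n) ∧
      Fn (fun p : (Unit × M) × M => f p.1 p.2) := by
  refine prim_rec (fun _ : Unit × M => (0 : M)) (fun γ n v => if Mem n γ.2 then v + 1 else v) ?_
  infer_instance

/-- Number of elements of `s` below `n`. -/
noncomputable def cnt (s n : M) : M := (cnt_ex M).choose ((), s) n

theorem cnt_zero (s : M) : cnt s 0 = 0 := (cnt_ex M).choose_spec.1 _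
theorem cnt_succ_mem {s n : M} (h : Mem n s) : cnt s (n + 1) = cnt s n + 1 :=
  ((cnt_ex M).choose_spec.2.1 _ _).trans (if_pos h)
theorem cnt_succ_not {s n : M} (h : ¬ Mem n s) : cnt s (n + 1) = cnt s n :=
  ((cnt_ex M).choose_spec.2.1 _ _).trans (if_neg h)

instance fnCnt {Γ : Type} [Env M Γ] (f g : Γ → M) [Fn f] [Fn g] : Fn (fun γ => cnt (f γ) (g γ)) :=
  fn2 (F := cnt) (cnt_ex M).choose_spec.2.2 f g

/-- Cardinality. -/
noncomputable def crd (s : M) : M := cnt s s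

instance fnCrd {Γ : Type} [Env M Γ] (f : Γ → M) [Fn f] : Fn (fun γ => crd (f γ)) := by
  unfold crd
  infer_instance

theorem cnt_gap {s a b : M} (hab : a ≤ b) (h : ∀ x, a ≤ x → x < b → ¬ Mem x s) :
    cnt s b = cnt s a := by
  obtain ⟨d, rfl⟩ := exists_add_of_le hab
  refine ind1b (R := fun d => cnt s (a + d) = cnt s a) d ?_ ?_ d le_rfl
  · rw [add_zero]
  · intro i hi ih
    rw [← add_assoc, cnt_succ_not (h _ le_self_add (add_lt_add_right hi a)), ih]

theorem crd_eq {s N : M} (h : ∀ x, Mem x s → x < N) : crd s = cnt s N := by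
  have h1 : cnt s (s + N) = cnt s s := cnt_gap le_self_add
    (fun x hx _ hm => absurd (mem_lt hm) (not_lt.mpr hx))
  have h2 : cnt s (s + N) = cnt s N := cnt_gap le_add_self
    (fun x hx _ hm => absurd (h x hm) (not_lt.mpr hx))
  exact h1.symm.trans h2

theorem cnt_mono {s a b : M} (hab : a ≤ b) : cnt s a ≤ cnt s b := by
  obtain ⟨d, rfl⟩ := exists_add_of_le hab
  refine ind1 (R := fun d => cnt s a ≤ cnt s (a + d)) ?_ ?_ d
  · rw [add_zero]
  · intro i ih
    rw [← add_assoc]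
    by_cases h : Mem (a + i) s
    · rw [cnt_succ_mem h]
      exact ih.trans le_self_add
    · rw [cnt_succ_not h]
      exact ih

theorem cnt_lt {s x n : M} (h : Mem x s) (hx : x < n) : cnt s x < cnt s n :=
  calc cnt s x < cnt s x + 1 := lt_succ_self' _
    _ = cnt s (x + 1) := (cnt_succ_mem h).symm
    _ ≤ cnt s n := cnt_mono (lt_iff_succ_le.mp hx)

theorem cnt_lt_crd {s x : M} (h : Mem x s) : cnt s x < crd s := cnt_lt h (mem_lt h)

theorem cnt_ivt {s i : M} (n : M) : i < cnt s n → ∃ p, p < n ∧ Mem p s ∧ cnt s p = i := by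
  refine ind1 (R := fun n => i < cnt s n → ∃ p, p < n ∧ Mem p s ∧ cnt s p = i) ?_ ?_ n
  · intro h
    rw [cnt_zero] at h
    exact absurd h (not_lt_zero' _)
  · intro n ih hi
    have up : (∃ p, p < n ∧ Mem p s ∧ cnt s p = i) → ∃ p, p < n + 1 ∧ Mem p s ∧ cnt s p = i :=
      fun ⟨p, h1, h2⟩ => ⟨p, h1.trans (lt_succ_self' n), h2⟩
    by_cases h : Mem n s
    · rw [cnt_succ_mem h, lt_succ_iff] at hi
      rcases hi.lt_or_eq with h' | h'
      · exact up (ih h')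
      · exact ⟨n, lt_succ_self' n, h, h'.symm⟩
    · rw [cnt_succ_not h] at hi
      exact up (ih hi)

theorem cnt_union {q a b : M} (n : M) (h : ∀ x, Mem x q → Mem x a ∨ Mem x b) :
    cnt q n ≤ cnt a n + cnt b n := by
  refine ind1 (R := fun n => cnt q n ≤ cnt a n + cnt b n) ?_ ?_ n
  · rw [cnt_zero]; exact zero_le_all _
  · intro n ih
    have ha : cnt a n ≤ cnt a (n + 1) := cnt_mono (lt_succ_self' n).le
    have hb : cnt b n ≤ cnt b (n + 1) := cnt_mono (lt_succ_self' n).le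
    by_cases hq : Mem n q
    · rw [cnt_succ_mem hq]
      rcases h n hq with h | h
      · rw [cnt_succ_mem h]
        calc cnt q n + 1 ≤ cnt a n + cnt b n + 1 := add_le_add_left ih 1
          _ = cnt a n + 1 + cnt b n := by ring
          _ ≤ _ := add_le_add_right hb _
      · rw [cnt_succ_mem h]
        calc cnt q n + 1 ≤ cnt a n + cnt b n + 1 := add_le_add_left ih 1
          _ = cnt a n + (cnt b n + 1) := by ring
          _ ≤ _ := add_le_add_left ha _
    · rw [cnt_succ_not hq]
      exact ih.trans (add_le_add ha hb)

theorem crd_union {q a b : M} (h : ∀ x, Mem x q → Mem x a ∨ Mem x b) :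
    crd q ≤ crd a + crd b := by
  rw [crd_eq (s := q) (N := q + a + b) (fun x hx => (mem_lt hx).trans_le (le_self_add.trans le_self_add)),
    crd_eq (s := a) (N := q + a + b) (fun x hx => (mem_lt hx).trans_le (le_add_self.trans le_self_add)),
    crd_eq (s := b) (N := q + a + b) (fun x hx => (mem_lt hx).trans_le le_add_self)]
  exact cnt_union _ h

theorem crd_zero : crd (0 : M) = 0 := cnt_zero _

theorem crd_mono {a b : M} (h : Sub a b) : crd a ≤ crd b := by
  have := crd_union (q := a) (a := b) (b := 0) (fun x hx => Or.inl (h x hx))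
  rwa [crd_zero, add_zero] at this

theorem cnt_congr {s t : M} (n : M) (h : ∀ x, x < n → (Mem x s ↔ Mem x t)) : cnt s n = cnt t n := by
  refine ind1b (R := fun n => cnt s n = cnt t n) n ?_ ?_ n le_rfl
  · rw [cnt_zero, cnt_zero]
  · intro i hi ih
    by_cases hm : Mem i s
    · rw [cnt_succ_mem hm, cnt_succ_mem ((h i hi).mp hm), ih]
    · rw [cnt_succ_not hm, cnt_succ_not (fun h' => hm ((h i hi).mpr h')), ih]

theorem crd_ins {u p : M} (h : ¬ Mem p u) : crd (ins u p) = crd u + 1 := by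
  obtain ⟨N, hN⟩ : ∃ N, N = u + (p + 1) := ⟨_, rfl⟩
  have hp : p + 1 ≤ N := by rw [hN]; exact le_add_self
  have hu : u ≤ N := by rw [hN]; exact le_self_add
  rw [crd_eq (s := ins u p) (N := N), crd_eq (s := u) (N := N)]
  · have h1 : cnt (ins u p) p = cnt u p := cnt_congr p (fun x hx => by
      rw [mem_ins]; have := hx.ne; tauto)
    obtain ⟨d, hd⟩ := exists_add_of_le hp
    rw [hd]
    refine ind1 (R := fun d => cnt (ins u p) (p + 1 + d) = cnt u (p + 1 + d) + 1) ?_ ?_ d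
    · rw [add_zero, cnt_succ_mem (mem_ins.mpr (Or.inl rfl)), cnt_succ_not h, h1]
    · intro i ih
      have hlt : p ≠ p + 1 + i := (lt_of_lt_of_le (lt_succ_self' p) le_self_add).ne
      rw [← add_assoc]
      by_cases hm : Mem (p + 1 + i) u
      · rw [cnt_succ_mem hm, cnt_succ_mem (mem_ins.mpr (Or.inr hm)), ih]
      · rw [cnt_succ_not hm, cnt_succ_not, ih]
        rw [mem_ins]
        have := hlt.symm
        tauto
  · exact fun x hx => (mem_lt hx).trans_le hu
  · intro x hx
    rcases mem_ins.mp hx with rfl | hx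
    · exact lt_iff_succ_le.mpr hp
    · exact (mem_lt hx).trans_le hu

theorem sub_eq_of_crd {r s : M} (h : Sub r s) (hc : crd s ≤ crd r) : r = s := by
  refine mem_ext (fun x => ⟨h x, fun hx => ?_⟩)
  by_contra hr
  have h1 : Sub (ins r x) s := by
    intro z hz
    rcases mem_ins.mp hz with rfl | hz
    · exact hx
    · exact h z hz
  have h2 := crd_mono h1
  rw [crd_ins hr] at h2
  exact absurd (h2.trans hc) (not_le.mpr (lt_succ_self' _))

theorem full_ex (n : M) : ∃ s, (∀ x, Mem x s ↔ x < n) ∧ crd s = n := by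
  obtain ⟨s, h1, h2⟩ := compr (R := fun _ => True) n
  have h3 : ∀ x, Mem x s ↔ x < n := fun x => by rw [h2]; simp
  refine ⟨s, h3, ?_⟩
  rw [crd_eq (fun x hx => (h3 x).mp hx)]
  refine ind1b (R := fun i => cnt s i = i) n (cnt_zero s) ?_ n le_rfl
  intro i hi ih
  rw [cnt_succ_mem ((h3 i).mpr hi), ih]

theorem trim {s x : M} (h : x ≤ crd s) : ∃ t, Sub t s ∧ crd t = x := by
  rcases h.lt_or_eq with h | h
  · obtain ⟨p, -, hp, e⟩ := cnt_ivt (s := s) s h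
    obtain ⟨t, -, ht⟩ := compr (R := fun x => Mem x s) p
    refine ⟨t, fun z hz => ((ht z).mp hz).2, ?_⟩
    rw [crd_eq (fun x hx => ((ht x).mp hx).1), ← e]
    exact cnt_congr p (fun x hx => by rw [ht]; tauto)
  · exact ⟨s, Sub.rfl, h.symm⟩

end Card

end ArithFC
namespace ArithFC

/-! ### Finite Ramsey theorem for Σ₁ functions -/

set_option synthInstance.maxHeartbeats 1000000
set_option synthInstance.maxSize 4096
set_option maxHeartbeats 1000000

section Ramsey

variable {M : Type} [lang.Structure M] [PAI M]

theorem pigeonhole {f : M → M} (hf : Fn (fun p : Unit × M => f p.2)) (k P : M)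
    (hk : ∀ x, f x < k) :
    ∃ P', Sub P' P ∧ (∀ x, Mem x P' → ∀ y, Mem y P' → f x = f y) ∧ crd P ≤ k * crd P' := by
  have hf' := fun Γ [Env M Γ] (g : Γ → M) [Fn g] => fn1 hf g
  have key := ind1 (R := fun c => ∃ Q P', (∀ x, Mem x P → f x < c → Mem x Q) ∧ Sub P' P ∧
    (∀ x, Mem x P' → ∀ y, Mem y P' → f x = f y) ∧ crd Q ≤ c * crd P') ?_ ?_ k
  · obtain ⟨Q, P', h1, h2, h3, h4⟩ := key
    exact ⟨P', h2, h3, (crd_mono (fun x hx => h1 x hx (hk x))).trans h4⟩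
  · refine ⟨0, 0, fun x _ h => absurd h (not_lt_zero' _), fun x hx => absurd hx (not_mem_zero x),
      fun x hx => absurd hx (not_mem_zero x), ?_⟩
    rw [crd_zero]
    exact zero_le_all _
  · rintro c ⟨Q, P', h1, h2, h3, h4⟩
    obtain ⟨B, -, hB⟩ := compr (R := fun x => Mem x P ∧ f x = c) P
    obtain ⟨U, -, hU⟩ := compr (R := fun x => Mem x Q ∨ Mem x B) (Q + B)
    have hU1 : ∀ x, Mem x P → f x < c + 1 → Mem x U := by
      intro x hx hc
      rw [hU]
      rcases (lt_succ_iff.mp hc).lt_or_eq with h | h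
      · have := h1 x hx h
        exact ⟨(mem_lt this).trans_le le_self_add, Or.inl this⟩
      · have : Mem x B := (hB x).mpr ⟨mem_lt hx, hx, h⟩
        exact ⟨(mem_lt this).trans_le le_add_self, Or.inr this⟩
    have hU2 : crd U ≤ crd Q + crd B := crd_union (fun x hx => ((hU x).mp hx).2)
    rcases le_total (crd B) (crd P') with h | h
    · refine ⟨U, P', hU1, h2, h3, ?_⟩
      calc crd U ≤ crd Q + crd B := hU2
        _ ≤ c * crd P' + crd P' := add_le_add h4 h
        _ = (c + 1) * crd P' := by ring
    · refine ⟨U, B, hU1, fun x hx => ((hB x).mp hx).2.1, fun x hx y hy => ?_, ?_⟩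
      · rw [((hB x).mp hx).2.2, ((hB y).mp hy).2.2]
      · calc crd U ≤ crd Q + crd B := hU2
          _ ≤ c * crd B + crd B := add_le_add (h4.trans (mul_le_mul_right h c)) le_rfl
          _ = (c + 1) * crd B := by ring

theorem refine_set {h : M → M → M} (hh : Fn (fun p : (Unit × M) × M => h p.1.2 p.2)) (k P l : M)
    (hk : ∀ j x, h j x < k) :
    ∃ P', Sub P' P ∧ (∀ j, j < l → ∀ x, Mem x P' → ∀ y, Mem y P' → h j x = h j y) ∧
      crd P ≤ pw k l * crd P' := by
  have hh' := fun Γ [Env M Γ] (f g : Γ → M) [Fn f] [Fn g] => fn2 hh f g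
  refine ind1 (R := fun l => ∃ P', Sub P' P ∧
    (∀ j, j < l → ∀ x, Mem x P' → ∀ y, Mem y P' → h j x = h j y) ∧
      crd P ≤ pw k l * crd P') ?_ ?_ l
  · refine ⟨P, Sub.rfl, fun j hj => absurd hj (not_lt_zero' j), ?_⟩
    rw [pw_zero, one_mul]
  · rintro l ⟨P', h1, h2, h3⟩
    obtain ⟨P'', h4, h5, h6⟩ := pigeonhole (f := h l) inferInstance k P' (hk l)
    refine ⟨P'', h4.trans h1, fun j hj x hx y hy => ?_, ?_⟩
    · rcases (lt_succ_iff.mp hj).lt_or_eq with h | rfl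
      · exact h2 j h x (h4 x hx) y (h4 y hy)
      · exact h5 x hx y hy
    · rw [pw_succ, mul_assoc]
      exact h3.trans (mul_le_mul_right h6 _)

open Classical in
/-- clipping to `[0,k)` -/
noncomputable def cl (k v : M) : M := if v < k then v else 0

instance fnCl {Γ : Type} [Env M Γ] (f g : Γ → M) [hf : Fn f] [hg : Fn g] :
    Fn (fun γ => cl (f γ) (g γ)) := by
  refine fn2 (F := cl) ?_ f g
  unfold cl
  infer_instance

theorem cl_lt {k : M} (hk : 0 < k) (v : M) : cl k v < k := by
  unfold cl
  split_ifs with h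
  · exact h
  · exact hk

theorem cl_eq {k v : M} (h : v < k) : cl k v = v := if_pos h

/-- doubling of lists of subsets -/
theorem double_list (N L a : M) : ∃ L', (∀ j, j < N → sat L' j = sat L j) ∧
    (∀ j, j < N → sat L' (N + j) = ins (sat L j) a) := by
  obtain ⟨L', h⟩ := choice (m := 1) PAI.ind (F := fun i v => (i < N ∧ v = sat L i) ∨
    ∃ j, j < N ∧ i = N + j ∧ v = ins (sat L j) a) inferInstance (N + N) (fun i hi => by
      rcases lt_or_ge i N with h | h
      · exact ⟨_, Or.inl ⟨h, rfl⟩⟩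
      · obtain ⟨j, rfl⟩ := exists_add_of_le h
        exact ⟨_, Or.inr ⟨j, lt_of_add_lt_add_left hi, rfl, rfl⟩⟩)
  refine ⟨L', fun j hj => ?_, fun j hj => ?_⟩
  · rcases (h j (hj.trans_le le_self_add)).1 with ⟨_, h⟩ | ⟨j', _, h, _⟩
    · exact h
    · rw [h] at hj
      exact absurd hj (not_lt.mpr le_self_add)
  · rcases (h (N + j) (add_lt_add_right hj N)).1 with ⟨h, _⟩ | ⟨j', _, h, h'⟩
    · exact absurd h (not_lt.mpr le_self_add)
    · rw [h', add_left_cancel h]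

theorem step_lemma {g : M → M} (hg : Fn (fun p : Unit × M => g p.2)) (k m A : M)
    (hgk : ∀ u, g u < k) (hA : k * pw (pw k (p2 m) + 1) m ≤ crd A) :
    ∃ A', Sub A' A ∧ m ≤ crd A' ∧ ∃ G, ∀ u, Sub u A' → ∀ p, Mem p A' → Above u p →
      g (ins u p) = sat G u := by
  have hg' := fun Γ [Env M Γ] (f : Γ → M) [Fn f] => fn1 hg f
  have hk0 : 0 < k := (zero_le_all _).trans_lt (hgk 0)
  obtain ⟨K, hK⟩ : ∃ K, K = pw k (p2 m) := ⟨_, rfl⟩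
  have hKpos : 0 < K := by rw [hK]; exact pw_pos hk0 _
  rw [← hK] at hA
  have hX : 0 < K + 1 := succ_pos' K
  have key := ind1b (R := fun i => ∃ S L P, crd S = i ∧ Sub S A ∧ Sub P A ∧
    (∀ x, Mem x S → ∀ y, Mem y P → x < y) ∧
    (∀ u, Sub u S → ∃ j, j < p2 i ∧ u = sat L j) ∧
    (∀ u, Sub u S → ∀ p, p < S + P → (Mem p S ∨ Mem p P) → ∀ q, q < S + P →
      (Mem q S ∨ Mem q P) → Above u p → Above u q → g (ins u p) = g (ins u q)) ∧
    pw (K + 1) m ≤ pw (K + 1) i * crd P) m ?_ ?_ m le_rfl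
  · obtain ⟨S, L, P, h1, h2, h3, h4, h5, h6, h7⟩ := key
    refine ⟨S, h2, h1.ge, ?_⟩
    obtain ⟨G, hG⟩ := choice (m := 1) PAI.ind
      (F := fun u v => ∀ p, Mem p S → Sub u S → Above u p → g (ins u p) = v) inferInstance (p2 S)
      (fun u _ => by
        by_cases hu : ∃ q, Mem q S ∧ Sub u S ∧ Above u q
        · obtain ⟨q, hq, hu, hq'⟩ := hu
          refine ⟨g (ins u q), fun p hp _ hp' => ?_⟩
          exact h6 u hu p ((mem_lt hp).trans_le le_self_add) (Or.inl hp) q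
            ((mem_lt hq).trans_le le_self_add) (Or.inl hq) hp' hq'
        · exact ⟨0, fun p hp h h' => absurd ⟨p, hp, h, h'⟩ hu⟩)
    exact ⟨G, fun u hu p hp hup => (hG u hu.lt).1 p hp hu hup⟩
  · obtain ⟨L, -, hL⟩ := append_seq (0 : M) 0 0
    obtain ⟨P, hP1, hP2, hP3⟩ := pigeonhole (f := fun p => g (ins 0 p)) inferInstance k A
      (fun x => hgk _)
    have hu0 : ∀ u : M, Sub u 0 → u = 0 := fun u hu =>
      mem_ext (fun x => ⟨fun h => hu x h, fun h => absurd h (not_mem_zero x)⟩)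
    refine ⟨0, L, P, crd_zero, fun x hx => absurd hx (not_mem_zero x), hP1,
      fun x hx => absurd hx (not_mem_zero x), fun u hu => ⟨0, p2_pos 0, ?_⟩, ?_, ?_⟩
    · rw [hL]
      exact hu0 u hu
    · intro u hu p _ hp q _ hq _ _
      rw [hu0 u hu]
      exact hP2 p (hp.resolve_left (not_mem_zero p)) q (hq.resolve_left (not_mem_zero q))
    · rw [pw_zero, one_mul]
      exact le_of_mul_le_mul_left (hA.trans hP3) hk0
  · rintro i hi ⟨S, L, P, h1, h2, h3, h4, h5, h6, h7⟩
    have h6' : ∀ u, Sub u S → ∀ p, (Mem p S ∨ Mem p P) → ∀ q,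
        (Mem q S ∨ Mem q P) → Above u p → Above u q → g (ins u p) = g (ins u q) := by
      have hb : ∀ p, (Mem p S ∨ Mem p P) → p < S + P := by
        rintro p (h | h)
        · exact (mem_lt h).trans_le le_self_add
        · exact (mem_lt h).trans_le le_add_self
      exact fun u hu p hp q hq => h6 u hu p (hb p hp) hp q (hb q hq) hq
    -- the size of `P`
    have hP : K + 1 ≤ crd P := by
      have e1 : pw (K + 1) i * (K + 1) ≤ pw (K + 1) m := by
        rw [← pw_succ]
        exact pw_mono hX (lt_iff_succ_le.mp hi)
      exact le_of_mul_le_mul_left (e1.trans h7) (pw_pos hX i)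
    have hPne : ∃ a, Mem a P := by
      by_contra hc
      have : P = 0 := mem_ext (fun x => ⟨fun h => absurd ⟨x, h⟩ hc, fun h => absurd h (not_mem_zero x)⟩)
      rw [this, crd_zero] at hP
      exact absurd (hX.trans_le hP) (lt_irrefl _)
    obtain ⟨a, ha, hmin⟩ := least1 (R := fun a => Mem a P) hPne
    obtain ⟨P0, -, hP0⟩ := compr (R := fun x => Mem x P ∧ x ≠ a) P
    have haP0 : ¬ Mem a P0 := fun h => ((hP0 a).mp h).2.2 rfl
    have hPins : P = ins P0 a := by
      refine mem_ext (fun x => ?_)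
      rw [mem_ins, hP0]
      constructor
      · intro hx
        by_cases hxa : x = a
        · exact Or.inl hxa
        · exact Or.inr ⟨mem_lt hx, hx, hxa⟩
      · rintro (rfl | h)
        · exact ha
        · exact h.2.1
    have hcP : crd P = crd P0 + 1 := by
      rw [hPins, crd_ins haP0]
    obtain ⟨P', hP'1, hP'2, hP'3⟩ := refine_set (h := fun j p => g (ins (ins (sat L j) a) p))
      inferInstance k P0 (p2 i) (fun j x => hgk _)
    have hKi : pw k (p2 i) ≤ K := by
      rw [hK]
      exact pw_mono hk0 (p2_mono hi.le)
    have hcP0 : crd P0 ≤ K * crd P' := hP'3.trans (mul_le_mul_left hKi _)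
    have hP'pos : 1 ≤ crd P' := by
      apply one_le_of_pos
      rcases (zero_le_all (crd P')).eq_or_lt with h | h
      · rw [← h, mul_zero] at hcP0
        rw [hcP, add_le_add_iff_right] at hP
        exact absurd (hKpos.trans_le (hP.trans hcP0)) (lt_irrefl _)
      · exact h
    have hcP' : crd P ≤ (K + 1) * crd P' := by
      rw [hcP, add_mul, one_mul]
      exact add_le_add hcP0 hP'pos
    have hP'P : ∀ x, Mem x P' → Mem x P ∧ a < x := by
      intro x hx
      obtain ⟨_, h, hne⟩ := (hP0 x).mp (hP'1 x hx)
      refine ⟨h, lt_of_le_of_ne (not_lt.mp (fun hlt => hmin x hlt h)) (Ne.symm hne)⟩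
    have haS : ¬ Mem a S := fun h => lt_irrefl _ (h4 a h a ha)
    obtain ⟨L', hL1, hL2⟩ := double_list (p2 i) L a
    -- subsets of `ins S a`
    have hsub : ∀ u, Sub u (ins S a) → Sub u S ∨ ∃ u', Sub u' S ∧ u = ins u' a := by
      intro u hu
      by_cases hau : Mem a u
      · obtain ⟨u', -, hu'⟩ := compr (R := fun x => Mem x u ∧ x ≠ a) u
        refine Or.inr ⟨u', fun x hx => ?_, mem_ext (fun x => ?_)⟩
        · obtain ⟨_, hx1, hx2⟩ := (hu' x).mp hx
          exact (mem_ins.mp (hu x hx1)).resolve_left hx2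
        · rw [mem_ins, hu']
          constructor
          · intro hx
            by_cases hxa : x = a
            · exact Or.inl hxa
            · exact Or.inr ⟨mem_lt hx, hx, hxa⟩
          · rintro (rfl | h)
            · exact hau
            · exact h.2.1
      · refine Or.inl (fun x hx => (mem_ins.mp (hu x hx)).resolve_left ?_)
        rintro rfl
        exact hau hx
    refine ⟨ins S a, L', P', ?_, ?_, ?_, ?_, ?_, ?_, ?_⟩
    · rw [crd_ins haS, h1]
    · intro x hx
      rcases mem_ins.mp hx with rfl | hx
      · exact h3 x ha
      · exact h2 x hx
    · exact fun x hx => h3 x (hP'P x hx).1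
    · intro x hx y hy
      rcases mem_ins.mp hx with rfl | hx
      · exact (hP'P y hy).2
      · exact h4 x hx y (hP'P y hy).1
    · intro u hu
      rw [p2_succ]
      rcases hsub u hu with hu | ⟨u', hu', rfl⟩
      · obtain ⟨j, hj, rfl⟩ := h5 u hu
        exact ⟨j, hj.trans_le le_self_add, (hL1 j hj).symm⟩
      · obtain ⟨j, hj, rfl⟩ := h5 u' hu'
        exact ⟨p2 i + j, add_lt_add_right hj _, (hL2 j hj).symm⟩
    · intro u hu p _ hp q _ hq hup huq
      have hold : ∀ p, (Mem p (ins S a) ∨ Mem p P') → (Mem p S ∨ Mem p P) := by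
        rintro p (h | h)
        · rcases mem_ins.mp h with rfl | h
          · exact Or.inr ha
          · exact Or.inl h
        · exact Or.inr (hP'P p h).1
      rcases hsub u hu with hu | ⟨u', hu', rfl⟩
      · exact h6' u hu p (hold p hp) q (hold q hq) hup huq
      · have hnew : ∀ p, (Mem p (ins S a) ∨ Mem p P') → Above (ins u' a) p → Mem p P' := by
          rintro p (h | h) hab
          · have hap := hab a (mem_ins.mpr (Or.inl rfl))
            rcases mem_ins.mp h with rfl | h
            · exact absurd hap (lt_irrefl _)
            · exact absurd (h4 p h a ha) (not_lt.mpr hap.le)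
          · exact h
        obtain ⟨j, hj, rfl⟩ := h5 u' hu'
        exact hP'2 j hj p (hnew p hp hup) q (hnew q hq huq)
    · rw [pw_succ, mul_assoc]
      exact h7.trans (mul_le_mul_right hcP' _)

theorem tower_ex (k x : M) : ∃ T : M → M, T 0 = x ∧
    (∀ t, T (t + 1) = k * pw (pw k (p2 (T t)) + 1) (T t)) ∧ Fn (fun p : Unit × M => T p.2) := by
  obtain ⟨f, h1, h2, h3⟩ := prim_rec (fun _ : Unit => x)
    (fun _ _ v => k * pw (pw k (p2 v) + 1) v) inferInstance
  exact ⟨f (), h1 _, h2 _, h3⟩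

/-- The finite Ramsey theorem for colorings of bitsets given by Σ₁ functions. -/
theorem ramsey1 (k e x : M) (hk : 0 < k) : ∃ y : M, ∀ col : M → M,
    Fn (fun p : Unit × M => col p.2) → (∀ u, col u < k) →
    ∃ H, crd H = x ∧ (∀ z, Mem z H → z < y) ∧ ∃ i, i < k ∧ ∀ s, Sub s H → crd s = e → col s = i := by
  obtain ⟨T, hT0, hTs, hT⟩ := tower_ex k x
  refine ⟨T e, fun col hcol hck => ?_⟩
  have hT' := fun Γ [Env M Γ] (f : Γ → M) [Fn f] => fn1 hT f
  have hcol' := fun Γ [Env M Γ] (f : Γ → M) [Fn f] => fn1 hcol f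
  have key := ind1b (R := fun t => ∃ A G t', t + t' = e ∧ T t' ≤ crd A ∧
    (∀ z, Mem z A → z < T e) ∧
    ∀ s, Sub s A → crd s = e → ∀ r, Sub r s → crd r = t' →
      (∀ x, Mem x r → ∀ z, Mem z s → Mem z r ∨ x < z) → col s = cl k (sat G r)) e ?_ ?_ e le_rfl
  · obtain ⟨A, G, t', h1, h2, h3, h4⟩ := key
    have ht' : t' = 0 := add_left_cancel (h1.trans (add_zero e).symm)
    rw [ht', hT0] at h2
    obtain ⟨H, hH1, hH2⟩ := trim h2
    refine ⟨H, hH2, fun z hz => h3 z (hH1 z hz), cl k (sat G 0), cl_lt hk _, fun s hs hse => ?_⟩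
    refine h4 s (hs.trans hH1) hse 0 (fun x hx => absurd hx (not_mem_zero x)) ?_
      (fun x hx => absurd hx (not_mem_zero x))
    rw [ht', crd_zero]
  · obtain ⟨A, hA1, hA2⟩ := full_ex (T e)
    obtain ⟨G, hG⟩ := exists_seq hcol (p2 A)
    refine ⟨A, G, e, zero_add e, hA2.ge, fun z hz => (hA1 z).mp hz, ?_⟩
    intro s hs hse r hr hre _
    rw [sub_eq_of_crd hr (by rw [hse, hre]), hG s hs.lt, cl_eq (hck s)]
  · rintro t ht ⟨A, G, t', h1, h2, h3, h4⟩
    have ht' : t' ≠ 0 := by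
      rintro rfl
      rw [add_zero] at h1
      exact absurd h1 ht.ne
    obtain ⟨t'', rfl⟩ := exists_pred ht'
    rw [hTs] at h2
    obtain ⟨A', hA1, hA2, G', hG'⟩ := step_lemma (g := fun u => cl k (sat G u)) inferInstance k
      (T t'') A (fun u => cl_lt hk _) h2
    refine ⟨A', G', t'', by rw [← h1]; ring, hA2, fun z hz => h3 z (hA1 z hz), ?_⟩
    intro s hs hse r hr hrt hinit
    have hex : ∃ p, Mem p s ∧ ¬ Mem p r := by
      by_contra hc
      push Not at hc
      have h5 := crd_mono (a := s) (b := r) hc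
      rw [hse, hrt, ← h1] at h5
      have h6 : t + (t'' + 1) = t'' + 1 + t := by ring
      rw [h6] at h5
      exact absurd (le_self_add.trans h5) (not_le.mpr (lt_succ_self' _))
    obtain ⟨p, ⟨hp1, hp2⟩, hmin⟩ := least1 (R := fun p => Mem p s ∧ ¬ Mem p r) hex
    have hab : Above r p := fun z hz => (hinit z hz p hp1).resolve_left hp2
    have h7 := h4 s (hs.trans hA1) hse (ins r p) ?_ ?_ ?_
    · rw [h7]
      have h8 := hG' r (hr.trans hs) p (hs p hp1) hab
      have h9 : sat G' r < k := by
        rw [← h8]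
        exact cl_lt hk _
      rw [cl_eq h9]
      exact h8
    · intro z hz
      rcases mem_ins.mp hz with rfl | hz
      · exact hp1
      · exact hr z hz
    · rw [crd_ins hp2, hrt]
    · intro z hz w hw
      by_cases hwr : Mem w r
      · exact Or.inl (mem_ins.mpr (Or.inr hwr))
      · by_cases hwp : w = p
        · exact Or.inl (mem_ins.mpr (Or.inl hwp))
        · right
          have hpw : p < w := by
            refine lt_of_le_of_ne (not_lt.mp (fun h => hmin w h ⟨hw, hwr⟩)) (Ne.symm hwp)
          rcases mem_ins.mp hz with rfl | hz
          · exact hpw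
          · exact (hab z hz).trans hpw

end Ramsey
end ArithFC
namespace ArithFC

/-! ### Interface with coded finite sets, and the final theorem -/

set_option synthInstance.maxHeartbeats 1000000
set_option synthInstance.maxSize 4096
set_option maxHeartbeats 1000000

section Final

variable {M : Type} [lang.Structure M] [PAI M]

/-- The set coded by a bitset. -/
def ext (u : M) : Set M := {x | Mem x u}

theorem mem_ext_iff {x u : M} : x ∈ ext u ↔ Mem x u := Iff.rfl

theorem code_of_bitset {u e : M} (hu : crd u = e) : ∃ d, CodesFinset d (ext u) e := by
  obtain ⟨s, hs⟩ := choice (m := 1) PAI.ind (F := fun i v => Mem v u ∧ cnt u v = i) inferInstance e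
    (fun i hi => by
      rw [← hu] at hi
      obtain ⟨p, _, h⟩ := cnt_ivt (s := u) u hi
      exact ⟨p, h⟩)
  obtain ⟨d, hd⟩ := exists_pair e s
  refine ⟨d, s, hd, fun i hi => ⟨sat s i, (hs i hi).1.1, (hs i hi).2⟩, ?_, fun x => ⟨?_, ?_⟩⟩
  · intro i j x y hij hj hx hy
    rw [← sat_eq hx, ← sat_eq hy]
    by_contra hc
    have := cnt_mono (s := u) (not_lt.mp hc)
    rw [(hs i (hij.trans hj)).1.2, (hs j hj).1.2] at this
    exact absurd hij (not_lt.mpr this)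
  · intro hx
    have hi : cnt u x < e := by
      rw [← hu]
      exact cnt_lt_crd hx
    obtain ⟨⟨h1, h2⟩, h3⟩ := hs _ hi
    refine ⟨cnt u x, hi, ?_⟩
    rcases lt_trichotomy x (sat s (cnt u x)) with h | h | h
    · exact absurd h2 (cnt_lt hx h).ne'
    · rwa [← h] at h3
    · exact absurd h2 (cnt_lt h1 h).ne
  · rintro ⟨i, hi, hx⟩
    have := hs i hi
    rw [sat_eq hx] at this
    exact this.1.1

theorem sd3 {Γ : Type} [Env M Γ] {m : ℕ} [Lv M m] {R : M → M → M → Prop}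
    (h : Sd M m (fun p : ((Unit × M) × M) × M => R p.1.1.2 p.1.2 p.2)) (f g k : Γ → M)
    [hf : Fn f] [hg : Fn g] [hk : Fn k] : Sd M m (fun γ => R (f γ) (g γ) (k γ)) := by
  have hg' : Fn (fun p : Γ × M => g p.1) := hg.comp (fun p : Γ × M => p.1)
  have hk' : Fn (fun p : (Γ × M) × M => k p.1.1) := hk.comp (fun p : (Γ × M) × M => p.1.1)
  refine Sd.sub (R := fun γ x => R x (g γ) (k γ)) ?_ f
  refine Sd.sub (m := m) (R := fun p x => R p.2 x (k p.1)) ?_ (fun p : Γ × M => g p.1)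
  refine Sd.sub (m := m) (R := fun p x => R p.1.2 p.2 x) ?_ (fun p : (Γ × M) × M => k p.1.1)
  exact h.comp (fun p : ((Γ × M) × M) × M => ((((), p.1.1.2), p.1.2), p.2))

instance sdSeqAt {Γ : Type} [Env M Γ] {m : ℕ} [Lv M m] (f g h : Γ → M) [Fn f] [Fn g] [Fn h] :
    Sd M m (fun γ => SeqAt (f γ) (g γ) (h γ)) :=
  sd3 (R := SeqAt) (Sd.ofOne sdSeqAt0) f g h

instance pdSeqAt {Γ : Type} [Env M Γ] {m : ℕ} [hm : Lv M m] (f g h : Γ → M) [Fn f] [Fn g] [Fn h] :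
    Pd M m (fun γ => SeqAt (f γ) (g γ) (h γ)) :=
  pdOfNot (sd3 (R := fun s i x => ¬ SeqAt s i x) (sdNot (pdSeqAt0.mono hm.pos)) f g h)

instance sdCodes {Γ : Type} [Env M Γ] {m : ℕ} [hm : Lv M m] (f g h : Γ → M) [Fn f] [Fn g] [Fn h] :
    Sd M m (fun γ => CodesFinset (f γ) (ext (g γ)) (h γ)) := by
  refine sd3 (R := fun d u e => CodesFinset d (ext u) e) ?_ f g h
  have : Sd M m (fun p : ((Unit × M) × M) × M => ∃ s,
      (p.1.1.2 + p.1.1.2 = (p.2 + s) * (p.2 + s + 1) + (s + s)) ∧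
      (∀ i, i < p.2 → ∃ x, Mem x p.1.2 ∧ SeqAt s i x) ∧
      (∀ j, j < p.2 → ∀ i, i < j → ∀ x, x ≤ s → SeqAt s i x → ∀ y, y ≤ s → SeqAt s j y → x < y) ∧
      (∀ x, Mem x p.1.2 → ∃ i, i < p.2 ∧ SeqAt s i x) ∧
      (∀ i, i < p.2 → ∀ x, x ≤ s → SeqAt s i x → Mem x p.1.2)) := inferInstance
  refine this.congr (fun p => ?_)
  constructor
  · rintro ⟨s, h1, h2, h3, h4⟩
    exact ⟨s, h1, h2, fun j hj i hi x _ hx y _ hy => h3 i j x y hi hj hx hy,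
      fun x hx => (h4 x).mp hx, fun i hi x _ hx => (h4 x).mpr ⟨i, hi, hx⟩⟩
  · rintro ⟨s, h1, h2, h3, h4, h5⟩
    exact ⟨s, h1, h2, fun i j x y hi hj hx hy => h3 j hj i hi x (seqAt_le hx) hx y (seqAt_le hy) hy,
      fun x => ⟨fun hx => h4 x hx, fun ⟨i, hi, hx⟩ => h5 i hi x (seqAt_le hx) hx⟩⟩

theorem bitset_of_code {d e : M} {D : Set M} (h : CodesFinset d D e) :
    ∃ u, ext u = D ∧ crd u = e := by
  obtain ⟨s, -, h2, h3, h4⟩ := h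
  have hs : ∀ i, i < e → SeqAt s i (sat s i) := by
    intro i hi
    obtain ⟨x, -, hx⟩ := h2 i hi
    rwa [sat_eq hx]
  have hmono : ∀ i j, i < j → j < e → sat s i < sat s j := fun i j hij hj =>
    h3 i j _ _ hij hj (hs i (hij.trans hj)) (hs j hj)
  obtain ⟨u, -, hu⟩ := compr (R := fun x => ∃ i, i < e ∧ SeqAt s i x) (s + 1)
  have hu' : ∀ x, Mem x u ↔ ∃ i, i < e ∧ sat s i = x := by
    intro x
    rw [hu]
    constructor
    · rintro ⟨_, i, hi, hx⟩
      exact ⟨i, hi, sat_eq hx⟩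
    · rintro ⟨i, hi, rfl⟩
      exact ⟨lt_succ_iff.mpr (seqAt_le (hs i hi)), i, hi, hs i hi⟩
  refine ⟨u, Set.ext (fun x => ?_), ?_⟩
  · rw [h4, mem_ext_iff, hu']
    constructor
    · rintro ⟨i, hi, rfl⟩
      exact ⟨i, hi, hs i hi⟩
    · rintro ⟨i, hi, hx⟩
      exact ⟨i, hi, sat_eq hx⟩
  · have gap : ∀ i, i + 1 < e → ∀ x, sat s i + 1 ≤ x → x < sat s (i + 1) → ¬ Mem x u := by
      intro i hi x h1 h2 hm
      obtain ⟨j, hj, rfl⟩ := (hu' x).mp hm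
      rw [← lt_iff_succ_le] at h1
      rcases lt_or_ge i j with hij | hij
      · rcases (lt_iff_succ_le.mp hij).lt_or_eq with h | h
        · exact absurd (hmono _ _ h hj) (not_lt.mpr h2.le)
        · rw [← h] at h2
          exact lt_irrefl _ h2
      · rcases hij.lt_or_eq with h | h
        · exact absurd (hmono _ _ h ((lt_succ_self' i).trans hi)) (not_lt.mpr h1.le)
        · rw [h] at h1
          exact lt_irrefl _ h1
    have hcnt : ∀ i, i < e → cnt u (sat s i) = i := by
      intro i
      refine ind1 (R := fun i => i < e → cnt u (sat s i) = i) ?_ ?_ i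
      · intro he
        rw [cnt_gap (zero_le_all (sat s 0)), cnt_zero]
        intro x _ hx hm
        obtain ⟨j, hj, rfl⟩ := (hu' x).mp hm
        rcases (zero_le_all j).lt_or_eq with h | h
        · exact absurd (hmono _ _ h hj) (not_lt.mpr hx.le)
        · rw [← h] at hx
          exact lt_irrefl _ hx
      · intro i ih hi
        have hi' : i < e := (lt_succ_self' i).trans hi
        rw [cnt_gap (lt_iff_succ_le.mp (hmono i (i + 1) (lt_succ_self' i) hi)) (gap i hi),
          cnt_succ_mem ((hu' _).mpr ⟨i, hi', rfl⟩), ih hi']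
    by_cases he : e = 0
    · have : u = 0 := by
        refine mem_ext (fun x => ⟨fun hm => ?_, fun hm => absurd hm (not_mem_zero x)⟩)
        obtain ⟨j, hj, rfl⟩ := (hu' x).mp hm
        rw [he] at hj
        exact absurd hj (not_lt_zero' _)
      rw [this, crd_zero, he]
    · obtain ⟨e', rfl⟩ := exists_pred he
      have he' := lt_succ_self' e'
      rw [crd_eq (N := sat s e' + 1), cnt_succ_mem ((hu' _).mpr ⟨e', he', rfl⟩), hcnt e' he']
      intro x hm
      obtain ⟨j, hj, rfl⟩ := (hu' x).mp hm
      rw [lt_succ_iff]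
      rcases (lt_succ_iff.mp hj).lt_or_eq with h | h
      · exact (hmono _ _ h he').le
      · rw [h]

/-- A Σ_{n+1} function with bounded domain and range is coded. -/
theorem code_function {n : ℕ} (hn : 1 ≤ n) (hI : ISig n M) (hB : BSig (n + 1) M) {F : M → M → Prop}
    (hF : Sd M (n + 1) (fun p : (Unit × M) × M => F p.1.2 p.2)) (N k : M)
    (hex : ∀ u, u < N → ∃ i, i < k ∧ F u i)
    (huniq : ∀ u i i', u < N → F u i → F u i' → i = i') :
    ∃ s, ∀ u, u < N → sat s u < k ∧ F u (sat s u) := by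
  have lv : Lv M n := ⟨hn, BSig_mono (Nat.le_succ n) hB⟩
  have lv' : Lv M (n + 1) := ⟨by omega, hB⟩
  obtain ⟨P, hP, hFP⟩ := Sd.normal (fun R hR f _ =>
    have := fnTm f
    pdBexI (R := R) f (h := hR)) hF
  have hPs : Sd M (n + 1) (fun p : ((Unit × M) × M) × M => P (((), p.1.1.2), p.2) p.1.2) :=
    (sdOfPd hP).comp (fun p : ((Unit × M) × M) × M => ((((), p.1.1.2), p.2), p.1.2))
  obtain ⟨b, hb⟩ := Sd.collect hB (R := fun u w => ∃ i, i < k ∧ P (((), u), i) w) inferInstance N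
    (fun u hu => by
      obtain ⟨i, hi, h⟩ := hex u hu
      obtain ⟨w, hw⟩ := (hFP (((), u), i)).mp h
      exact ⟨w, i, hi, hw⟩)
  have hF' : Pd M n (fun p : (Unit × M) × M => ∃ w, w < b ∧ P p w) :=
    pdBexI (R := P) (fun _ => b) (h := hP)
  have hF'' : Pd M n (fun p : ((Unit × M) × M) × M => ∃ w, w < b ∧ P (((), p.1.1.2), p.2) w) :=
    hF'.comp (fun p : ((Unit × M) × M) × M => (((), p.1.1.2), p.2))
  have hF3 : Sd M n (fun p : ((Unit × M) × M) × M => ¬ ∃ w, w < b ∧ P (((), p.1.1.2), p.2) w) :=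
    sdNot hF''
  have hG : ∀ u i, (∃ w, w < b ∧ P (((), u), i) w) → F u i := fun u i ⟨w, _, hw⟩ =>
    (hFP (((), u), i)).mpr ⟨w, hw⟩
  have hG' : ∀ u, u < N → ∃ i, i < k ∧ ∃ w, w < b ∧ P (((), u), i) w := by
    intro u hu
    obtain ⟨w, hw, i, hi, h⟩ := hb u hu
    exact ⟨i, hi, w, hw, h⟩
  obtain ⟨s, hs⟩ := choice (m := n) hI (F := fun u i => i < k ∧
    ∀ i', i' < k → (i' ≠ i → ¬ ∃ w, w < b ∧ P (((), u), i') w)) inferInstance N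
    (fun u hu => by
      obtain ⟨i, hi, h⟩ := hG' u hu
      refine ⟨i, hi, fun i' _ hne h' => hne ?_⟩
      exact huniq u _ _ hu (hG u i' h') (hG u i h))
  refine ⟨s, fun u hu => ⟨(hs u hu).1.1, ?_⟩⟩
  obtain ⟨i, hi, h⟩ := hG' u hu
  by_cases hne : i = sat s u
  · rw [← hne]
    exact hG u i h
  · exact absurd h ((hs u hu).1.2 i hi hne)

theorem frt_main {n : ℕ} (hn : 1 ≤ n) (hI : ISig n M) (hB : BSig (n + 1) M) (e k : M)
    (hk : 1 ≤ k) : FRT M (n + 1) e k := by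
  have lv' : Lv M (n + 1) := ⟨by omega, hB⟩
  have hk0 : 0 < k := lt_of_lt_of_le zero_lt_one hk
  intro x
  obtain ⟨y, hy⟩ := ramsey1 k e x hk0
  refine ⟨y, fun C ⟨hC, hC1, hC2⟩ => ?_⟩
  have hC' := fun Γ [Env M Γ] (f g : Γ → M) [Fn f] [Fn g] => sd2 (def2_Sd hC) f g
  have hin : ∀ u, u < p2 y → ∀ z, z ∈ ext u → z < y := fun u hu z hz => mem_lt_of_lt hz hu
  obtain ⟨s, hs⟩ := code_function hn hI hB
    (F := fun u i => (crd u ≠ e ∧ i = 0) ∨ (crd u = e ∧ ∃ d, CodesFinset d (ext u) e ∧ C d i))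
    inferInstance (p2 y) k
    (fun u hu => by
      by_cases h : crd u = e
      · obtain ⟨d, hd⟩ := code_of_bitset h
        obtain ⟨i, hi, hCi⟩ := hC1 d (ext u) ⟨hd, hin u hu⟩
        exact ⟨i, hi, Or.inr ⟨h, d, hd, hCi⟩⟩
      · exact ⟨0, hk0, Or.inl ⟨h, rfl⟩⟩)
    (fun u i i' hu h h' => by
      rcases h with ⟨h1, h2⟩ | ⟨h1, d, h2, h3⟩ <;> rcases h' with ⟨h1', h2'⟩ | ⟨h1', d', h2', h3'⟩
      · rw [h2, h2']
      · exact absurd h1' h1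
      · exact absurd h1 h1'
      · exact hC2 d d' (ext u) i i' ⟨h2, hin u hu⟩ ⟨h2', hin u hu⟩ h3 h3')
  obtain ⟨H, hH1, hH2, i, hi, hH3⟩ := hy (fun u => cl k (sat s u)) inferInstance
    (fun u => cl_lt hk0 _)
  obtain ⟨c, hc⟩ := code_of_bitset hH1
  refine ⟨c, ext H, hc, hH2, i, fun d D hd hD => ?_⟩
  obtain ⟨u, rfl, hu⟩ := bitset_of_code hd
  have huy : u < p2 y := lt_p2_of_mem (fun z hz => hH2 z (hD hz))
  have h1 := hH3 u (fun z hz => hD hz) hu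
  obtain ⟨h2, h3⟩ := hs u huy
  rw [cl_eq h2] at h1
  rcases h3 with ⟨h3, _⟩ | ⟨_, d', h3, h4⟩
  · exact absurd hu h3
  · obtain ⟨i', _, h5⟩ := hC1 d (ext u) ⟨hd, hin u huy⟩
    have h6 := hC2 d d' (ext u) _ _ ⟨hd, hin u huy⟩ ⟨h3, hin u huy⟩ h5 h4
    rw [h6, h1] at h5
    exact h5

end Final

/-- For every `n ≥ 1`, PA⁻ + BΣ_{n+1} (which includes IΣn) proves
FRT^{<ω}(Σ_{n+1}). -/
theorem statement_5 (n : ℕ) (hn : 1 ≤ n) (M : Type) [lang.Structure M]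
    (hPA : PAm M) (hI : ISig n M) (hB : BSig (n + 1) M) :
    ∀ e k : M, (1 : M) ≤ e → (1 : M) ≤ k → FRT M (n + 1) e k := by
  have : PAI M := ⟨hPA, ISig_mono hn hI, BSig_mono (by omega) hB⟩
  intro e k _ hk
  exact frt_main hn hI hB e k hk

end ArithFC
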